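/- Assume the uniform ellipticity condition (D3) and the regularity condition (R1). Let F and G be the unique weak solutions in 𝓕 of the Cauchy problem with respective initial conditions F₀ and G₀ (cumulative distribution functions with finite first moments), and assume each of F and G has classical regularity (C^{1,2} on (0,∞)×ℝ, solving the PDE pointwise) with (t,x) ↦ ∂_x F_t(x) and (t,x) ↦ ∂_x G_t(x) bounded on [t₁,t₂]×ℝ for all 0 < t₁ < t₂. Let p ≥ 2 be such that W_p(F₀,G₀) < +∞ and |x|^{p−1}(tl(F₀,x) + tl(G₀,x)) → 0 as x → ±∞. Then for all 0 < t₁ < t₂: W_p^p(F_{t₂},G_{t₂}) − W_p^p(F_{t₁},G_{t₁}) = −(p(p−1)/2) ∫_{t₁}^{t₂} ∫₀¹ a(u) |F_t^{-1}(u) − G_t^{-1}(u)|^{p−2} (∂_u F_t^{-1}(u) − ∂_u G_t^{-1}(u))² / (∂_u F_t^{-1}(u) ∂_u G_t^{-1}(u)) du dt. -/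

import Mathlib

open MeasureTheory Set Filter Topology Function
open scoped ENNReal

noncomputable section

/-- `primitive f u = ∫₀^u f(v) dv`. -/
def primitive (f : ℝ → ℝ) : ℝ → ℝ := fun u => ∫ v in (0:ℝ)..u, f v

/-- The cumulative distribution function `H * μ` of a measure `μ` on `ℝ`. -/
def cdfOf (μ : MeasureTheory.Measure ℝ) : ℝ → ℝ := fun x => (μ (Set.Iic x)).toReal

/-- Pseudo-inverse of a cdf: `F⁻¹(u) = inf {x | F x > u}`. -/
def pinv (F : ℝ → ℝ) (u : ℝ) : ℝ := sInf {x : ℝ | u < F x}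

/-- Wasserstein distance of order `p` between two cdfs, in `[0,∞]`. -/
def Wdist (p : ℝ) (F G : ℝ → ℝ) : ℝ≥0∞ :=
  (∫⁻ u in Set.Ioo (0:ℝ) 1, ENNReal.ofReal (|pinv F u - pinv G u| ^ p)) ^ (1/p)

/-- Tail function `tl(f,x) = 1_{x ≥ 0} (1 - f(x)) + 1_{x ≤ 0} f(x)`. -/
def tl (f : ℝ → ℝ) (x : ℝ) : ℝ :=
  (if 0 ≤ x then 1 - f x else 0) + (if x ≤ 0 then f x else 0)

/-- `F` is a weak solution of `∂ₜ F = (1/2) ∂ₓₓ (A (F)) - ∂ₓ (B (F))` with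
initial condition `F₀`. -/
def IsWeakSolution (A B : ℝ → ℝ) (F₀ : ℝ → ℝ) (F : ℝ → ℝ → ℝ) : Prop :=
  ∀ g : ℝ → ℝ → ℝ, ContDiff ℝ (⊤ : ℕ∞) (Function.uncurry g) →
    HasCompactSupport (Function.uncurry g) →
    ∀ t : ℝ, 0 ≤ t →
      ((∫ x : ℝ, g t x * F t x) - ∫ x : ℝ, g 0 x * F₀ x) =
        ∫ x : ℝ, ∫ s in (0:ℝ)..t,
          ((1/2) * A (F s x) * deriv (deriv (fun y => g s y)) x
            + B (F s x) * deriv (fun y => g s y) x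
            + F s x * deriv (fun r => g r x) s)

/-- Membership in the class `𝓕`. -/
def MemF (F : ℝ → ℝ → ℝ) : Prop :=
  ∃ P : ℝ → ProbabilityMeasure ℝ,
    ContinuousOn P (Set.Ici 0) ∧
    (∀ t : ℝ, 0 ≤ t → Integrable (fun x => |x|) (P t : Measure ℝ)) ∧
    (∀ T : ℝ, 0 < T → IntegrableOn (fun t => ∫ x, |x| ∂(P t : Measure ℝ)) (Set.Icc 0 T)) ∧
    (∀ t : ℝ, 0 ≤ t → ∀ x : ℝ, F t x = ((P t : Measure ℝ) (Set.Iic x)).toReal)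

/-- `F` has the classical regularity: it is `C^{1,2}` on `(0,∞) × ℝ` and solves the
Cauchy problem `∂ₜ F = (1/2) ∂ₓₓ (A(F)) - ∂ₓ (B(F))` in the classical sense there. -/
def HasClassicalRegularity (a b : ℝ → ℝ) (F : ℝ → ℝ → ℝ) : Prop :=
  ∃ Ft Fx Fxx : ℝ → ℝ → ℝ,
    (∀ t : ℝ, 0 < t → ∀ x : ℝ,
      HasDerivAt (fun s => F s x) (Ft t x) t ∧
      HasDerivAt (fun y => F t y) (Fx t x) x ∧
      HasDerivAt (fun y => Fx t y) (Fxx t x) x) ∧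
    ContinuousOn (fun q : ℝ × ℝ => F q.1 q.2) (Set.Ioi 0 ×ˢ (Set.univ : Set ℝ)) ∧
    ContinuousOn (fun q : ℝ × ℝ => Ft q.1 q.2) (Set.Ioi 0 ×ˢ (Set.univ : Set ℝ)) ∧
    ContinuousOn (fun q : ℝ × ℝ => Fx q.1 q.2) (Set.Ioi 0 ×ˢ (Set.univ : Set ℝ)) ∧
    ContinuousOn (fun q : ℝ × ℝ => Fxx q.1 q.2) (Set.Ioi 0 ×ˢ (Set.univ : Set ℝ)) ∧
    (∀ t : ℝ, 0 < t → ∀ x : ℝ,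
      Ft t x = (1/2) * deriv (fun y => deriv (fun z => primitive a (F t z)) y) x
        - deriv (fun y => primitive b (F t y)) x)

section

theorem hasDerivAt_primitive {f : ℝ → ℝ} (hf : ContinuousOn f (Icc 0 1)) {u : ℝ}
    (hu : u ∈ Ioo (0:ℝ) 1) : HasDerivAt (primitive f) (f u) u := by
  have h1 : IntervalIntegrable f volume 0 u :=
    (hf.mono (by rw [uIcc_of_le hu.1.le]; exact Icc_subset_Icc le_rfl hu.2.le)).intervalIntegrable
  have h2 : ContinuousOn f (Ioo 0 1) := hf.mono Ioo_subset_Icc_self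
  exact intervalIntegral.integral_hasDerivAt_right h1
    (h2.stronglyMeasurableAtFilter isOpen_Ioo u hu)
    (h2.continuousAt (isOpen_Ioo.mem_nhds hu))

theorem primitive_lip {f : ℝ → ℝ} (hf : ContinuousOn f (Icc 0 1)) {C : ℝ}
    (hC : ∀ u ∈ Icc (0:ℝ) 1, |f u| ≤ C) {u v : ℝ} (hu : u ∈ Icc (0:ℝ) 1) (hv : v ∈ Icc (0:ℝ) 1) :
    |primitive f u - primitive f v| ≤ C * |u - v| := by
  have hii : ∀ w ∈ Icc (0:ℝ) 1, IntervalIntegrable f volume 0 w := fun w hw =>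
    (hf.mono (by rw [uIcc_of_le hw.1]; exact Icc_subset_Icc le_rfl hw.2)).intervalIntegrable
  unfold primitive
  rw [intervalIntegral.integral_interval_sub_left (hii u hu) (hii v hv)]
  have := intervalIntegral.norm_integral_le_of_norm_le_const (a := v) (b := u) (f := f) (C := C)
    (fun x hx => by
      have := uIoc_subset_uIcc hx
      have h2 : uIcc v u ⊆ Icc 0 1 := (convex_Icc (0:ℝ) 1).ordConnected.uIcc_subset hv hu
      exact hC x (h2 this))
  simpa using this

theorem primitive_cont {f : ℝ → ℝ} (hf : ContinuousOn f (Icc 0 1)) :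
    ContinuousOn (primitive f) (Icc 0 1) := by
  obtain ⟨C, hC⟩ := isCompact_Icc.exists_bound_of_continuousOn hf
  refine LipschitzOnWith.continuousOn (K := C.toNNReal) ?_
  refine LipschitzOnWith.of_dist_le_mul fun x hx y hy => ?_
  rw [Real.dist_eq, Real.dist_eq]
  have := primitive_lip hf (C := C) hC hx hy
  refine this.trans ?_
  gcongr
  exact Real.le_coe_toNNReal C

structure Sol (a b da : ℝ → ℝ) (F Ft Fx Fxx : ℝ → ℝ → ℝ) : Prop where
  dt : ∀ t : ℝ, 0 < t → ∀ x : ℝ, HasDerivAt (fun s => F s x) (Ft t x) t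
  dx : ∀ t : ℝ, 0 < t → ∀ x : ℝ, HasDerivAt (fun y => F t y) (Fx t x) x
  dxx : ∀ t : ℝ, 0 < t → ∀ x : ℝ, HasDerivAt (fun y => Fx t y) (Fxx t x) x
  cF : ContinuousOn (fun q : ℝ × ℝ => F q.1 q.2) (Set.Ioi 0 ×ˢ (Set.univ : Set ℝ))
  cFt : ContinuousOn (fun q : ℝ × ℝ => Ft q.1 q.2) (Set.Ioi 0 ×ˢ (Set.univ : Set ℝ))
  cFx : ContinuousOn (fun q : ℝ × ℝ => Fx q.1 q.2) (Set.Ioi 0 ×ˢ (Set.univ : Set ℝ))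
  cFxx : ContinuousOn (fun q : ℝ × ℝ => Fxx q.1 q.2) (Set.Ioi 0 ×ˢ (Set.univ : Set ℝ))
  mono : ∀ t : ℝ, 0 < t → Monotone (F t)
  bot : ∀ t : ℝ, 0 < t → Tendsto (F t) atBot (𝓝 0)
  top : ∀ t : ℝ, 0 < t → Tendsto (F t) atTop (𝓝 1)
  pde : ∀ t : ℝ, 0 < t → ∀ x : ℝ, Ft t x =
    1/2 * (da (F t x) * (Fx t x)^2 + a (F t x) * Fxx t x) - b (F t x) * Fx t x

theorem cdf_facts (P : ProbabilityMeasure ℝ) (f : ℝ → ℝ)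
    (hf : ∀ x, f x = ((P : Measure ℝ) (Iic x)).toReal) :
    Monotone f ∧ Tendsto f atBot (𝓝 0) ∧ Tendsto f atTop (𝓝 1) ∧ (∀ x, f x ∈ Icc (0:ℝ) 1) ∧
      ∀ x, ContinuousWithinAt f (Ici x) x := by
  have : f = fun x => ProbabilityTheory.cdf (P : Measure ℝ) x := by
    funext x; rw [hf x, ProbabilityTheory.cdf_eq_real]; rfl
  subst this
  exact ⟨ProbabilityTheory.monotone_cdf _, ProbabilityTheory.tendsto_cdf_atBot _,
    ProbabilityTheory.tendsto_cdf_atTop _, fun x =>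
      ⟨ProbabilityTheory.cdf_nonneg _ _, ProbabilityTheory.cdf_le_one _ _⟩,
      fun x => (ProbabilityTheory.cdf (P : Measure ℝ)).right_continuous x⟩

theorem Sol.of_hyp {a b : ℝ → ℝ} (ha : ContinuousOn a (Icc 0 1)) (hb : ContinuousOn b (Icc 0 1))
    (hR1 : ContDiffOn ℝ 1 a (Icc 0 1)) {F : ℝ → ℝ → ℝ} (hm : MemF F)
    (hcl : HasClassicalRegularity a b F) :
    ∃ Ft Fx Fxx, Sol a b (derivWithin a (Icc 0 1)) F Ft Fx Fxx := by
  obtain ⟨P, hPc, -, -, hPF⟩ := hm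
  obtain ⟨Ft, Fx, Fxx, hd, c0, c1, c2, c3, hpde⟩ := hcl
  have hc := fun t (ht : 0 < t) => cdf_facts (P t) (F t) (hPF t ht.le)
  refine ⟨Ft, Fx, Fxx, fun t ht x => (hd t ht x).1, fun t ht x => (hd t ht x).2.1,
    fun t ht x => (hd t ht x).2.2, c0, c1, c2, c3, fun t ht => (hc t ht).1,
    fun t ht => (hc t ht).2.1, fun t ht => (hc t ht).2.2.1, fun t ht x => ?_⟩
  obtain ⟨hmono, -, -, h01, -⟩ := hc t ht
  have hFxc : Continuous (F t) := continuous_iff_continuousAt.2 fun y => (hd t ht y).2.1.continuousAt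
  rcases eq_or_lt_of_le (h01 x).1 with h0 | h0
  · -- F = 0
    have e1 : Ft t x = 0 := by
      refine IsLocalMin.hasDerivAt_eq_zero ?_ (hd t ht x).1
      filter_upwards [Ioi_mem_nhds ht] with s hs
      rw [← h0]; exact ((hc s hs).2.2.2.1 x).1
    have hz : ∀ y ≤ x, F t y = 0 := fun y hy =>
      le_antisymm (h0 ▸ hmono hy) (h01 y).1
    have hFx0 : ∀ y ≤ x, Fx t y = 0 := fun y hy => by
      refine IsLocalMin.hasDerivAt_eq_zero ?_ (hd t ht y).2.1
      exact Eventually.of_forall fun z => by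
        show F t y ≤ F t z
        rw [hz y hy]; exact (h01 z).1
    have e2 : Fxx t x = 0 := by
      have h1 := (hd t ht x).2.2.hasDerivWithinAt (s := Iic x)
      have h2 : HasDerivWithinAt (fun y => Fx t y) 0 (Iic x) x :=
        (hasDerivWithinAt_const x (Iic x) (0:ℝ)).congr (fun y hy => hFx0 y hy) (hFx0 x le_rfl)
      exact (uniqueDiffWithinAt_Iic x).eq_deriv _ h1 h2
    rw [e1, e2, hFx0 x le_rfl]; ring
  rcases eq_or_lt_of_le (h01 x).2 with h1 | h1
  · have e1 : Ft t x = 0 := by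
      refine IsLocalMax.hasDerivAt_eq_zero ?_ (hd t ht x).1
      filter_upwards [Ioi_mem_nhds ht] with s hs
      rw [h1]; exact ((hc s hs).2.2.2.1 x).2
    have hz : ∀ y, x ≤ y → F t y = 1 := fun y hy =>
      le_antisymm (h01 y).2 (h1 ▸ hmono hy)
    have hFx0 : ∀ y, x ≤ y → Fx t y = 0 := fun y hy => by
      refine IsLocalMax.hasDerivAt_eq_zero ?_ (hd t ht y).2.1
      exact Eventually.of_forall fun z => by
        show F t z ≤ F t y
        rw [hz y hy]; exact (h01 z).2
    have e2 : Fxx t x = 0 := by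
      have h1 := (hd t ht x).2.2.hasDerivWithinAt (s := Ici x)
      have h2 : HasDerivWithinAt (fun y => Fx t y) 0 (Ici x) x :=
        (hasDerivWithinAt_const x (Ici x) (0:ℝ)).congr (fun y hy => hFx0 y hy) (hFx0 x le_rfl)
      exact (uniqueDiffWithinAt_Ici x).eq_deriv _ h1 h2
    rw [e1, e2, hFx0 x le_rfl]; ring
  rw [hpde t ht x]
  have hev : ∀ᶠ y in 𝓝 x, F t y ∈ Ioo (0:ℝ) 1 :=
    hFxc.continuousAt.eventually (isOpen_Ioo.mem_nhds ⟨h0, h1⟩)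
  have d1 : (fun y => deriv (fun z => primitive a (F t z)) y) =ᶠ[𝓝 x]
      fun y => a (F t y) * Fx t y := by
    filter_upwards [hev] with y hy
    exact ((hasDerivAt_primitive ha hy).comp y (hd t ht y).2.1).deriv
  have d2 : deriv (fun y => primitive b (F t y)) x = b (F t x) * Fx t x :=
    ((hasDerivAt_primitive hb ⟨h0, h1⟩).comp x (hd t ht x).2.1).deriv
  have da : HasDerivAt a (derivWithin a (Icc 0 1) (F t x)) (F t x) :=
    ((hR1.differentiableOn one_ne_zero) _ ⟨h0.le, h1.le⟩).hasDerivWithinAt.hasDerivAt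
      (Icc_mem_nhds h0 h1)
  rw [d1.deriv_eq, d2]
  have := ((da.comp x (hd t ht x).2.1).mul (hd t ht x).2.2).deriv
  have e : deriv (fun y => a (F t y) * Fx t y) x = derivWithin a (Icc 0 1) (F t x) * Fx t x * Fx t x + a (F t x) * Fxx t x := this
  rw [e]; ring
end

section

/-- Necessary second order condition at a local minimum. -/
theorem second_deriv_nonneg_of_localMin {f f' : ℝ → ℝ} {x m : ℝ}
    (h : IsLocalMin f x) (h1 : ∀ y, HasDerivAt f (f' y) y) (h2 : HasDerivAt f' m x) : 0 ≤ m := by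
  by_contra hm
  push Not at hm
  have hd : deriv f = f' := funext fun y => (h1 y).deriv
  have h0 : f' x = 0 := h.hasDerivAt_eq_zero (h1 x)
  have hmax : IsLocalMax f x := by
    refine isLocalMax_of_deriv_deriv_neg ?_ ?_ (h1 x).continuousAt
    · rw [hd, h2.deriv]; exact hm
    · rw [hd, h0]
  have hc : f =ᶠ[𝓝 x] fun _ => f x := by
    filter_upwards [h, hmax] with y hy1 hy2 using le_antisymm hy2 hy1
  have hc' : f' =ᶠ[𝓝 x] fun _ => (0:ℝ) := by
    filter_upwards [hc.eventuallyEq_nhds] with y hy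
    have := hy.deriv_eq
    rw [deriv_const, (h1 y).deriv] at this
    exact this
  have := h2.congr_of_eventuallyEq hc'.symm
  have h3 := this.unique (hasDerivAt_const x (0:ℝ))
  linarith

/-- One-sided first order condition. -/
theorem deriv_nonpos_of_left_min {f : ℝ → ℝ} {m t : ℝ} (h1 : HasDerivAt f m t)
    (h : ∀ᶠ s in 𝓝[<] t, f t ≤ f s) : m ≤ 0 := by
  have h2 := h1.hasDerivWithinAt (s := Iio t)
  rw [hasDerivWithinAt_iff_tendsto_slope' (by simp)] at h2
  refine le_of_tendsto h2 ?_
  filter_upwards [h, self_mem_nhdsWithin] with s hs hst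
  have hst' : s < t := hst
  rw [slope_def_field]
  exact div_nonpos_of_nonneg_of_nonpos (by linarith) (by linarith)

theorem barrier_ineq {c C Γ ρ m K Λ q ξ η α₁ α₂ γ₁ γ₂ r : ℝ} (hc : 0 < c) (hΓ : 0 ≤ Γ)
    (hC : 0 ≤ C) (hm : 0 ≤ m)
    (hρ : 0 < ρ) (hK : 0 < K) (hKb : 2 * C + 8 * Γ * ρ + m < K * c)
    (hΛ : K * (2 * C + 8 * Γ * ρ + m + 1) ≤ Λ * (1 - Real.exp (-(K/2))))
    (hα₁ : c ≤ α₁) (hα₂ : c ≤ α₂) (hα₁' : α₁ ≤ C) (hα₂' : α₂ ≤ C)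
    (hγ₁ : |γ₁| ≤ Γ) (hγ₂ : |γ₂| ≤ Γ) (hξ : |ξ| ≤ 2 * ρ) (hη : |η| ≤ 2 * ρ)
    (hr : 1 ≤ r) (hq : q = r - ξ ^ 2 - η ^ 2) (hq0 : 0 < q) :
    -Λ * (Real.exp (K * q) - 1) + K * Real.exp (K * q) * m <
      1/2 * α₁ * (K * Real.exp (K * q) * (4 * K * ξ ^ 2 - 2))
      + 1/2 * α₂ * (K * Real.exp (K * q) * (4 * K * η ^ 2 - 2))
      + γ₁ * (K * Real.exp (K * q) * (-2 * ξ)) + γ₂ * (K * Real.exp (K * q) * (-2 * η)) := by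
  set P := Real.exp (K * q) with hP
  have hP0 : 0 < P := Real.exp_pos _
  have hP1 : 1 < P := Real.one_lt_exp_iff.2 (by positivity)
  have g1 : |γ₁ * ξ| ≤ Γ * (2 * ρ) := by
    rw [abs_mul]; exact mul_le_mul hγ₁ hξ (abs_nonneg _) hΓ
  have g2 : |γ₂ * η| ≤ Γ * (2 * ρ) := by
    rw [abs_mul]; exact mul_le_mul hγ₂ hη (abs_nonneg _) hΓ
  have g1' := abs_le.1 g1
  have g2' := abs_le.1 g2
  have k1 : c * (K * ξ ^ 2) ≤ α₁ * (K * ξ ^ 2) := by gcongr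
  have k2 : c * (K * η ^ 2) ≤ α₂ * (K * η ^ 2) := by gcongr
  set N := 2 * C + 8 * Γ * ρ with hN
  have hN0 : 0 ≤ N := by positivity
  have low : 2 * K * c * (ξ ^ 2 + η ^ 2) - N ≤
      1/2 * α₁ * (4 * K * ξ ^ 2 - 2) + 1/2 * α₂ * (4 * K * η ^ 2 - 2) + γ₁ * (-2 * ξ)
        + γ₂ * (-2 * η) := by nlinarith
  have hKP : 0 < K * P := by positivity
  have low2 := mul_le_mul_of_nonneg_left low hKP.le
  have key : 0 < K * P * (2 * K * c * (ξ ^ 2 + η ^ 2) - N - m) + Λ * (P - 1) := by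
    have hexp : Real.exp (-(K/2)) < 1 := by
      rw [Real.exp_lt_one_iff]; linarith
    have hΛ0 : 0 ≤ Λ := by
      by_contra hneg
      push Not at hneg
      have : Λ * (1 - Real.exp (-(K/2))) < 0 := mul_neg_of_neg_of_pos hneg (by linarith)
      have : 0 ≤ K * (N + m + 1) := by positivity
      linarith
    rcases le_or_gt q (1/2) with hh | hh
    · have : 1/2 ≤ ξ ^ 2 + η ^ 2 := by linarith
      have h3 : K * c ≤ 2 * K * c * (ξ ^ 2 + η ^ 2) := by
        have : 0 < K * c := by positivity
        nlinarith
      have h4 : 0 < K * P * (2 * K * c * (ξ ^ 2 + η ^ 2) - N - m) :=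
        mul_pos hKP (by linarith)
      have h5 : 0 ≤ Λ * (P - 1) := mul_nonneg hΛ0 (by linarith)
      linarith
    · have h6 : 1 ≤ P * Real.exp (-(K/2)) := by
        rw [hP, ← Real.exp_add]
        exact Real.one_le_exp (by nlinarith)
      have h7 : Λ * (P * (1 - Real.exp (-(K/2)))) ≤ Λ * (P - 1) := by
        apply mul_le_mul_of_nonneg_left _ hΛ0; linarith
      have h8 : P * (K * (N + m + 1)) ≤ P * (Λ * (1 - Real.exp (-(K/2)))) :=
        mul_le_mul_of_nonneg_left hΛ hP0.le
      have h9 : 0 ≤ K * P * (2 * K * c * (ξ ^ 2 + η ^ 2)) := by positivity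
      have h10 : K * P * (2 * K * c * (ξ ^ 2 + η ^ 2) - N - m) =
        K * P * (2 * K * c * (ξ ^ 2 + η ^ 2)) - P * (K * (N + m + 1)) + K * P := by ring
      have h11 : Λ * (P * (1 - Real.exp (-(K/2)))) = P * (Λ * (1 - Real.exp (-(K/2)))) := by ring
      linarith
  have e1 : K * P * (2 * K * c * (ξ ^ 2 + η ^ 2) - N - m) =
    K * P * (2 * K * c * (ξ ^ 2 + η ^ 2) - N) - K * P * m := by ring
  have e2 : 1/2 * α₁ * (K * P * (4 * K * ξ ^ 2 - 2))
      + 1/2 * α₂ * (K * P * (4 * K * η ^ 2 - 2))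
      + γ₁ * (K * P * (-2 * ξ)) + γ₂ * (K * P * (-2 * η)) =
      K * P * (1/2 * α₁ * (4 * K * ξ ^ 2 - 2) + 1/2 * α₂ * (4 * K * η ^ 2 - 2) + γ₁ * (-2 * ξ)
        + γ₂ * (-2 * η)) := by ring
  rw [e2]
  linarith

variable {a b da : ℝ → ℝ} {F Ft Fx Fxx : ℝ → ℝ → ℝ}

theorem Sol.mem (h : Sol a b da F Ft Fx Fxx) {t : ℝ} (ht : 0 < t) (x : ℝ) :
    F t x ∈ Icc (0:ℝ) 1 :=
  ⟨(h.mono t ht).le_of_tendsto (h.bot t ht) x, (h.mono t ht).ge_of_tendsto (h.top t ht) x⟩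

set_option maxHeartbeats 2000000 in
theorem Sol.pos (h : Sol a b da F Ft Fx Fxx) {c C : ℝ} (hc : 0 < c)
    (hac : ∀ u ∈ Icc (0:ℝ) 1, c ≤ a u) (haC : ∀ u ∈ Icc (0:ℝ) 1, |a u| ≤ C)
    (hdaC : ∀ u ∈ Icc (0:ℝ) 1, |da u| ≤ C) (hbC : ∀ u ∈ Icc (0:ℝ) 1, |b u| ≤ C)
    {t₀ : ℝ} (ht₀ : 0 < t₀) (x₀ : ℝ) : 0 < Fx t₀ x₀ := by
  set t₁ := t₀ / 2 with ht₁d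
  have ht₁ : 0 < t₁ := by positivity
  have ht₁₀ : t₁ < t₀ := by linarith
  have hC0 : 0 ≤ C := (abs_nonneg _).trans (haC 0 ⟨le_rfl, zero_le_one⟩)
  -- choice of ρ
  obtain ⟨ρ, hρ1, hδ⟩ : ∃ ρ : ℝ, 1 ≤ ρ ∧ F t₁ (x₀ - ρ + 1) < F t₁ (x₀ + ρ - 1) := by
    have e1 : ∀ᶠ ρ in atTop, F t₁ (x₀ - ρ + 1) < 1/2 := by
      have : Tendsto (fun ρ : ℝ => x₀ - ρ + 1) atTop atBot := by
        refine tendsto_atBot_add_const_right _ _ ?_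
        exact tendsto_atBot_add_const_left _ x₀ tendsto_neg_atTop_atBot
      exact ((h.bot t₁ ht₁).comp this).eventually (gt_mem_nhds (by norm_num))
    have e2 : ∀ᶠ ρ in atTop, 1/2 < F t₁ (x₀ + ρ - 1) := by
      have : Tendsto (fun ρ : ℝ => x₀ + ρ - 1) atTop atTop := by
        refine tendsto_atTop_add_const_right _ _ ?_
        exact tendsto_atTop_add_const_left _ x₀ tendsto_id
      exact ((h.top t₁ ht₁).comp this).eventually (lt_mem_nhds (by norm_num))
    obtain ⟨ρ, h1, h2, h3⟩ := (e1.and (e2.and (eventually_ge_atTop 1))).exists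
    exact ⟨ρ, h3, h1.trans h2⟩
  have hρ0 : 0 < ρ := by linarith
  -- bound on Fx
  obtain ⟨M, hM⟩ := (isCompact_Icc.prod isCompact_Icc :
      IsCompact (Icc t₁ t₀ ×ˢ Icc (x₀ - 3 * ρ) (x₀ + 3 * ρ))).exists_bound_of_continuousOn
      (h.cFx.mono (by
        rintro ⟨t, x⟩ ⟨ht, -⟩
        exact ⟨ht₁.trans_le ht.1, mem_univ _⟩))
  have hM0 : 0 ≤ M := (norm_nonneg _).trans (hM (t₀, x₀)
    ⟨⟨ht₁₀.le, le_rfl⟩, ⟨by linarith, by linarith⟩⟩)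
  set Γ := C * M + C with hΓ
  have hΓ0 : 0 ≤ Γ := by positivity
  set m := (2 * ρ ^ 2 - 1) / (t₀ - t₁) with hmd
  have hm0 : 0 ≤ m := div_nonneg (by nlinarith) (by linarith)
  obtain ⟨K, hK0, hKb⟩ : ∃ K : ℝ, 0 < K ∧ 2 * C + 8 * Γ * ρ + m < K * c := by
    refine ⟨(2 * C + 8 * Γ * ρ + m + 1) / c, by positivity, ?_⟩
    rw [div_mul_cancel₀ _ hc.ne']; linarith
  have hexp : 0 < 1 - Real.exp (-(K/2)) := by
    have : Real.exp (-(K/2)) < 1 := by rw [Real.exp_lt_one_iff]; linarith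
    linarith
  obtain ⟨Λ, hΛ⟩ : ∃ Λ : ℝ, K * (2 * C + 8 * Γ * ρ + m + 1) ≤ Λ * (1 - Real.exp (-(K/2))) :=
    ⟨K * (2 * C + 8 * Γ * ρ + m + 1) / (1 - Real.exp (-(K/2))), by
      rw [div_mul_cancel₀ _ hexp.ne']⟩
  set δ := F t₁ (x₀ + ρ - 1) - F t₁ (x₀ - ρ + 1) with hδd
  have hδ0 : 0 < δ := by rw [hδd]; linarith
  set ε := δ / Real.exp K with hεd
  have hε0 : 0 < ε := by positivity
  set q : ℝ → ℝ → ℝ → ℝ := fun t x y =>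
    1 + m * (t - t₁) - (x - (x₀ + ρ)) ^ 2 - (y - (x₀ - ρ)) ^ 2 with hq
  set s : ℝ → ℝ → ℝ → ℝ := fun t x y =>
    Real.exp (-Λ * (t - t₁)) * (Real.exp (K * q t x y) - 1) with hs
  set W : ℝ → ℝ → ℝ → ℝ := fun t x y => F t x - F t y - ε * s t x y with hW
  set Q : Set (ℝ × ℝ × ℝ) := {z | z.1 ∈ Icc t₁ t₀ ∧ 0 ≤ q z.1 z.2.1 z.2.2} with hQ
  have hr : ∀ t ∈ Icc t₁ t₀, 1 ≤ 1 + m * (t - t₁) ∧ 1 + m * (t - t₁) ≤ 2 * ρ ^ 2 := by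
    intro t ht
    have h1 : m * (t₀ - t₁) = 2 * ρ ^ 2 - 1 := div_mul_cancel₀ _ (by linarith)
    have h2 : m * (t - t₁) ≤ m * (t₀ - t₁) :=
      mul_le_mul_of_nonneg_left (by linarith [ht.2]) hm0
    have h3 : 0 ≤ m * (t - t₁) := mul_nonneg hm0 (by linarith [ht.1])
    exact ⟨by linarith, by linarith⟩
  have hQb : ∀ t x y, t ∈ Icc t₁ t₀ → 0 ≤ q t x y →
      |x - (x₀ + ρ)| ≤ 2 * ρ ∧ |y - (x₀ - ρ)| ≤ 2 * ρ ∧ y ≤ x := by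
    intro t x y ht hq0
    have h1 := (hr t ht).2
    simp only [hq] at hq0
    refine ⟨abs_le_of_sq_le_sq (by nlinarith [sq_nonneg (y - (x₀ - ρ))]) (by linarith),
      abs_le_of_sq_le_sq (by nlinarith [sq_nonneg (x - (x₀ + ρ))]) (by linarith), ?_⟩
    have h2 : ((x - (x₀ + ρ)) - (y - (x₀ - ρ))) ^ 2 ≤ (2 * ρ) ^ 2 := by
      nlinarith [sq_nonneg ((x - (x₀ + ρ)) + (y - (x₀ - ρ)))]
    have h3 := (abs_le.1 (abs_le_of_sq_le_sq h2 (by linarith))).1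
    linarith
  have hqc : Continuous fun z : ℝ × ℝ × ℝ => q z.1 z.2.1 z.2.2 := by
    simp only [hq]; fun_prop
  have hsc : Continuous fun z : ℝ × ℝ × ℝ => s z.1 z.2.1 z.2.2 := by
    simp only [hs]; fun_prop
  have hQcomp : IsCompact Q := by
    refine IsCompact.of_isClosed_subset (s := Icc t₁ t₀ ×ˢ (Icc (x₀ - 3 * ρ) (x₀ + 3 * ρ) ×ˢ
      Icc (x₀ - 3 * ρ) (x₀ + 3 * ρ))) (isCompact_Icc.prod (isCompact_Icc.prod isCompact_Icc)) ?_ ?_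
    · exact (isClosed_Icc.preimage continuous_fst).inter (isClosed_le continuous_const hqc)
    · rintro ⟨t, x, y⟩ ⟨ht, h0⟩
      obtain ⟨h1, h2, -⟩ := hQb t x y ht h0
      rw [abs_le] at h1 h2
      exact ⟨ht, ⟨by linarith [h1.1], by linarith [h1.2]⟩, ⟨by linarith [h2.1], by linarith [h2.2]⟩⟩
  have hWc : ContinuousOn (fun z : ℝ × ℝ × ℝ => W z.1 z.2.1 z.2.2) Q := by
    simp only [hW]
    refine ContinuousOn.sub (ContinuousOn.sub ?_ ?_) (hsc.const_mul ε |>.continuousOn)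
    · exact h.cF.comp (f := fun z : ℝ × ℝ × ℝ => (z.1, z.2.1)) (by fun_prop)
        (fun z hz => ⟨ht₁.trans_le hz.1.1, mem_univ _⟩)
    · exact h.cF.comp (f := fun z : ℝ × ℝ × ℝ => (z.1, z.2.2)) (by fun_prop)
        (fun z hz => ⟨ht₁.trans_le hz.1.1, mem_univ _⟩)
  have hmain : ∀ z ∈ Q, 0 ≤ W z.1 z.2.1 z.2.2 := by
    by_contra hcon
    push Not at hcon
    obtain ⟨z₀, hz₀, hneg₀⟩ := hcon
    obtain ⟨⟨t, x, y⟩, hzQ, hmin⟩ := hQcomp.exists_isMinOn ⟨z₀, hz₀⟩ hWc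
    have hneg : W t x y < 0 := (hmin hz₀).trans_lt hneg₀
    obtain ⟨ht, hq0⟩ := hzQ
    simp only at ht hq0
    have htpos : 0 < t := ht₁.trans_le ht.1
    obtain ⟨hx1, hy1, hyx⟩ := hQb t x y ht hq0
    have hV : 0 ≤ F t x - F t y := by linarith [h.mono t htpos hyx]
    have hqpos : 0 < q t x y := by
      rcases hq0.eq_or_lt with h0 | h0
      · exfalso
        have : s t x y = 0 := by simp [hs, ← h0]
        simp only [hW, this] at hneg; linarith
      · exact h0
    have htlt : t₁ < t := by
      rcases ht.1.eq_or_lt with h0 | h0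
      · exfalso
        subst h0
        have hq1 : q t₁ x y = 1 - (x - (x₀ + ρ)) ^ 2 - (y - (x₀ - ρ)) ^ 2 := by
          simp [hq]
        have hx2 : |x - (x₀ + ρ)| ≤ 1 := abs_le_of_sq_le_sq
          (by rw [one_pow]; linarith [sq_nonneg (y - (x₀ - ρ))]) (by norm_num)
        have hy2 : |y - (x₀ - ρ)| ≤ 1 := abs_le_of_sq_le_sq
          (by rw [one_pow]; linarith [sq_nonneg (x - (x₀ + ρ))]) (by norm_num)
        have h3 : δ ≤ F t₁ x - F t₁ y := by
          have h4 := h.mono t₁ ht₁ (show x₀ + ρ - 1 ≤ x by linarith [(abs_le.1 hx2).1])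
          have h5 := h.mono t₁ ht₁ (show y ≤ x₀ - ρ + 1 by linarith [(abs_le.1 hy2).2])
          rw [hδd]; linarith
        have h6 : s t₁ x y ≤ Real.exp K := by
          have h7 : Real.exp (K * q t₁ x y) ≤ Real.exp K := by
            apply Real.exp_le_exp.2
            refine mul_le_of_le_one_right hK0.le ?_
            rw [hq1]
            linarith [sq_nonneg (y - (x₀ - ρ)), sq_nonneg (x - (x₀ + ρ))]
          simp only [hs, sub_self, mul_zero, Real.exp_zero, one_mul]
          linarith
        have h8 : ε * s t₁ x y ≤ δ := by
          calc ε * s t₁ x y ≤ ε * Real.exp K := by gcongr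
            _ = δ := div_mul_cancel₀ _ (Real.exp_pos K).ne'
        simp only [hW] at hneg
        linarith
      · exact h0
    set E := Real.exp (-Λ * (t - t₁)) with hE
    have hE0 : 0 < E := Real.exp_pos _
    set P := Real.exp (K * q t x y) with hP
    -- derivatives of s
    have dsx : ∀ x', HasDerivAt (fun x' => s t x' y)
        (E * (Real.exp (K * q t x' y) * (K * (-2 * (x' - (x₀ + ρ)))))) x' := by
      intro x'
      have e1 : HasDerivAt (fun x' => q t x' y) (-2 * (x' - (x₀ + ρ))) x' := by
        have := ((((hasDerivAt_id x').sub_const (x₀ + ρ)).pow 2).const_sub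
          (1 + m * (t - t₁))).sub_const ((y - (x₀ - ρ)) ^ 2)
        refine this.congr_deriv ?_
        simp
      exact (((e1.const_mul K).exp).sub_const 1).const_mul E
    have dsxx : HasDerivAt (fun x' => E * (Real.exp (K * q t x' y) * (K * (-2 * (x' - (x₀ + ρ))))))
        (E * (K * P * (4 * K * (x - (x₀ + ρ)) ^ 2 - 2))) x := by
      have e1 : HasDerivAt (fun x' => q t x' y) (-2 * (x - (x₀ + ρ))) x := by
        have := ((((hasDerivAt_id x).sub_const (x₀ + ρ)).pow 2).const_sub
          (1 + m * (t - t₁))).sub_const ((y - (x₀ - ρ)) ^ 2)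
        refine this.congr_deriv ?_
        simp
      have e2 : HasDerivAt (fun x' => K * (-2 * (x' - (x₀ + ρ)))) (K * (-2)) x := by
        have := (((hasDerivAt_id x).sub_const (x₀ + ρ)).const_mul (-2)).const_mul K
        simpa using this
      have := (((e1.const_mul K).exp).mul e2).const_mul E
      refine this.congr_deriv ?_
      rw [← hP]; ring
    have dsy : ∀ y', HasDerivAt (fun y' => s t x y')
        (E * (Real.exp (K * q t x y') * (K * (-2 * (y' - (x₀ - ρ)))))) y' := by
      intro y'
      have e1 : HasDerivAt (fun y' => q t x y') (-2 * (y' - (x₀ - ρ))) y' := by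
        have := (((hasDerivAt_id y').sub_const (x₀ - ρ)).pow 2).const_sub
          (1 + m * (t - t₁) - (x - (x₀ + ρ)) ^ 2)
        refine this.congr_deriv ?_
        simp
      exact (((e1.const_mul K).exp).sub_const 1).const_mul E
    have dsyy : HasDerivAt (fun y' => E * (Real.exp (K * q t x y') * (K * (-2 * (y' - (x₀ - ρ))))))
        (E * (K * P * (4 * K * (y - (x₀ - ρ)) ^ 2 - 2))) y := by
      have e1 : HasDerivAt (fun y' => q t x y') (-2 * (y - (x₀ - ρ))) y := by
        have := (((hasDerivAt_id y).sub_const (x₀ - ρ)).pow 2).const_sub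
          (1 + m * (t - t₁) - (x - (x₀ + ρ)) ^ 2)
        refine this.congr_deriv ?_
        simp
      have e2 : HasDerivAt (fun y' => K * (-2 * (y' - (x₀ - ρ)))) (K * (-2)) y := by
        have := (((hasDerivAt_id y).sub_const (x₀ - ρ)).const_mul (-2)).const_mul K
        simpa using this
      have := (((e1.const_mul K).exp).mul e2).const_mul E
      refine this.congr_deriv ?_
      rw [← hP]; ring
    have dst : HasDerivAt (fun t' => s t' x y) (E * (-Λ * (P - 1) + K * P * m)) t := by
      have e1 : HasDerivAt (fun t' => q t' x y) m t := by
        have := (((((hasDerivAt_id t).sub_const t₁).const_mul m).const_add 1).sub_const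
          ((x - (x₀ + ρ)) ^ 2)).sub_const ((y - (x₀ - ρ)) ^ 2)
        refine this.congr_deriv ?_
        simp
      have e2 : HasDerivAt (fun t' => -Λ * (t' - t₁)) (-Λ) t := by
        have := ((hasDerivAt_id t).sub_const t₁).const_mul (-Λ)
        simpa using this
      have := e2.exp.mul (((e1.const_mul K).exp).sub_const 1)
      refine this.congr_deriv ?_
      rw [← hP, ← hE]; ring
    -- optimality
    have hminx : IsLocalMin (fun x' => W t x' y) x := by
      have : ∀ᶠ x' in 𝓝 x, 0 < q t x' y := by
        have hcx : Continuous fun x' => q t x' y := by simp only [hq]; fun_prop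
        exact hcx.continuousAt.eventually (lt_mem_nhds hqpos)
      filter_upwards [this] with x' hx'
      exact hmin (show (t, x', y) ∈ Q from ⟨ht, hx'.le⟩)
    have hminy : IsLocalMin (fun y' => W t x y') y := by
      have : ∀ᶠ y' in 𝓝 y, 0 < q t x y' := by
        have hcx : Continuous fun y' => q t x y' := by simp only [hq]; fun_prop
        exact hcx.continuousAt.eventually (lt_mem_nhds hqpos)
      filter_upwards [this] with y' hy'
      exact hmin (show (t, x, y') ∈ Q from ⟨ht, hy'.le⟩)
    have hmint : ∀ᶠ t' in 𝓝[<] t, W t x y ≤ W t' x y := by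
      have h1 : ∀ᶠ t' in 𝓝 t, 0 < q t' x y ∧ t₁ < t' := by
        have hcx : Continuous fun t' => q t' x y := by simp only [hq]; fun_prop
        exact (hcx.continuousAt.eventually (lt_mem_nhds hqpos)).and (lt_mem_nhds htlt)
      filter_upwards [h1.filter_mono nhdsWithin_le_nhds, self_mem_nhdsWithin] with t' h2 h3
      exact hmin (show (t', x, y) ∈ Q from ⟨⟨h2.2.le, (le_of_lt h3).trans ht.2⟩, h2.1.le⟩)
    have dWx : ∀ x', HasDerivAt (fun x' => W t x' y) (Fx t x' -
        ε * (E * (Real.exp (K * q t x' y) * (K * (-2 * (x' - (x₀ + ρ))))))) x' := fun x' =>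
      ((h.dx t htpos x').sub_const (F t y)).sub ((dsx x').const_mul ε)
    have dWxx := (h.dxx t htpos x).sub (dsxx.const_mul ε)
    have dWy : ∀ y', HasDerivAt (fun y' => W t x y') (-Fx t y' -
        ε * (E * (Real.exp (K * q t x y') * (K * (-2 * (y' - (x₀ - ρ))))))) y' := fun y' =>
      ((h.dx t htpos y').const_sub (F t x)).sub ((dsy y').const_mul ε)
    have dWyy := (h.dxx t htpos y).neg.sub (dsyy.const_mul ε)
    have ox := hminx.hasDerivAt_eq_zero (dWx x)
    have oy := hminy.hasDerivAt_eq_zero (dWy y)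
    have oxx := second_deriv_nonneg_of_localMin hminx dWx dWxx
    have oyy := second_deriv_nonneg_of_localMin hminy dWy dWyy
    have ot := deriv_nonpos_of_left_min (((h.dt t htpos x).sub (h.dt t htpos y)).sub
      (dst.const_mul ε)) hmint
    rw [← hP] at ox oy
    have hFx : F t x ∈ Icc (0:ℝ) 1 := h.mem htpos x
    have hFy : F t y ∈ Icc (0:ℝ) 1 := h.mem htpos y
    rw [abs_le] at hx1 hy1
    have hbx : |Fx t x| ≤ M := hM (t, x) ⟨ht, ⟨by linarith [hx1.1], by linarith [hx1.2]⟩⟩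
    have hby : |Fx t y| ≤ M := hM (t, y) ⟨ht, ⟨by linarith [hy1.1], by linarith [hy1.2]⟩⟩
    have hγ : ∀ v f, v ∈ Icc (0:ℝ) 1 → |f| ≤ M → |1/2 * da v * f - b v| ≤ Γ := by
      intro v f hv hf
      have h1 : |da v * f| ≤ C * M := by
        rw [abs_mul]; exact mul_le_mul (hdaC v hv) hf (abs_nonneg _) hC0
      have h2 := hbC v hv
      rw [abs_le] at h1 h2 ⊢
      have : 0 ≤ C * M := by positivity
      constructor <;> rw [hΓ] <;> linarith [h1.1, h1.2, h2.1, h2.2]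
    have bar := barrier_ineq (q := q t x y) (ξ := x - (x₀ + ρ)) (η := y - (x₀ - ρ))
      (r := 1 + m * (t - t₁)) hc hΓ0 hC0 hm0 hρ0 hK0 hKb hΛ (hac _ hFx) (hac _ hFy)
      ((le_abs_self _).trans (haC _ hFx)) ((le_abs_self _).trans (haC _ hFy))
      (hγ _ _ hFx hbx) (hγ _ _ hFy hby) (abs_le.2 hx1) (abs_le.2 hy1) (hr t ht).1 rfl hqpos
    rw [← hP] at bar
    have pde1 := h.pde t htpos x
    have pde2 := h.pde t htpos y
    have bar2 := mul_lt_mul_of_pos_left bar (mul_pos hε0 hE0)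
    have a1 : 0 ≤ a (F t x) := hc.le.trans (hac _ hFx)
    have a2 : 0 ≤ a (F t y) := hc.le.trans (hac _ hFy)
    have m1 := mul_nonneg a1 oxx
    have m2 := mul_nonneg a2 oyy
    have ex : Fx t x = ε * (E * (P * (K * (-2 * (x - (x₀ + ρ)))))) := by linarith
    have ey : Fx t y = -(ε * (E * (P * (K * (-2 * (y - (x₀ - ρ))))))) := by linarith
    have p1 : Ft t x = 1/2 * (a (F t x) * Fxx t x)
      + (1/2 * da (F t x) * Fx t x - b (F t x)) * (ε * (E * (P * (K * (-2 * (x - (x₀ + ρ))))))) := by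
      rw [pde1, ← ex]; ring
    have p2 : Ft t y = 1/2 * (a (F t y) * Fxx t y)
      + (1/2 * da (F t y) * Fx t y - b (F t y)) * (-(ε * (E * (P * (K * (-2 * (y - (x₀ - ρ)))))))) := by
      rw [pde2, ← ey]; ring
    set γ₁ := 1/2 * da (F t x) * Fx t x - b (F t x)
    set γ₂ := 1/2 * da (F t y) * Fx t y - b (F t y)
    rw [p1, p2] at ot
    linarith
  -- conclusion
  have hlow : ∀ h' ∈ Ioo (0:ℝ) ρ, ε * (Real.exp (-Λ * (t₀ - t₁)) * (K * (2 * ρ))) * h' ≤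
      F t₀ (x₀ + h') - F t₀ (x₀ - h') := by
    intro h' hh'
    have hqv : q t₀ (x₀ + h') (x₀ - h') = 4 * ρ * h' - 2 * h' ^ 2 := by
      have h1 : m * (t₀ - t₁) = 2 * ρ ^ 2 - 1 := div_mul_cancel₀ _ (by linarith)
      simp only [hq]; rw [h1]; ring
    have hq2 : 2 * ρ * h' ≤ q t₀ (x₀ + h') (x₀ - h') := by
      rw [hqv]; nlinarith [hh'.1, hh'.2]
    have h3 := hmain (t₀, x₀ + h', x₀ - h') ⟨⟨ht₁₀.le, le_rfl⟩, le_trans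
      (by have := hh'.1; positivity) hq2⟩
    simp only [hW, hs] at h3
    have h4 : K * (2 * ρ * h') ≤ Real.exp (K * q t₀ (x₀ + h') (x₀ - h')) - 1 := by
      have := Real.add_one_le_exp (K * q t₀ (x₀ + h') (x₀ - h'))
      have h5 : K * (2 * ρ * h') ≤ K * q t₀ (x₀ + h') (x₀ - h') := by gcongr
      linarith
    have h6 : ε * (Real.exp (-Λ * (t₀ - t₁)) * (K * (2 * ρ * h'))) ≤
      ε * (Real.exp (-Λ * (t₀ - t₁)) * (Real.exp (K * q t₀ (x₀ + h') (x₀ - h')) - 1)) := by gcongr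
    have : ε * (Real.exp (-Λ * (t₀ - t₁)) * (K * (2 * ρ))) * h' =
      ε * (Real.exp (-Λ * (t₀ - t₁)) * (K * (2 * ρ * h'))) := by ring
    linarith
  set κ := ε * (Real.exp (-Λ * (t₀ - t₁)) * (K * (2 * ρ))) with hκ
  have hκ0 : 0 < κ := by positivity
  have hder : HasDerivAt (fun h' => F t₀ (x₀ + h') - F t₀ (x₀ - h')) (2 * Fx t₀ x₀) 0 := by
    have e1 : HasDerivAt (fun h' : ℝ => x₀ + h') 1 0 := (hasDerivAt_id _).const_add x₀
    have e2 : HasDerivAt (fun h' : ℝ => x₀ - h') (-1) 0 := (hasDerivAt_id _).const_sub x₀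
    have d1 : HasDerivAt (fun y => F t₀ y) (Fx t₀ x₀) (x₀ + 0) := by simpa using h.dx t₀ ht₀ x₀
    have d2 : HasDerivAt (fun y => F t₀ y) (Fx t₀ x₀) (x₀ - 0) := by simpa using h.dx t₀ ht₀ x₀
    have := (d1.comp (0:ℝ) e1).sub (d2.comp (0:ℝ) e2)
    refine this.congr_deriv ?_
    ring
  have hder' := hder.hasDerivWithinAt (s := Ioi 0)
  rw [hasDerivWithinAt_iff_tendsto_slope' (by simp)] at hder'
  have : κ ≤ 2 * Fx t₀ x₀ := by
    refine ge_of_tendsto hder' ?_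
    filter_upwards [Ioo_mem_nhdsGT hρ0] with h' hh'
    rw [slope_def_field]
    simp only [add_zero, sub_zero, sub_self]
    rw [le_div_iff₀ hh'.1]
    exact hlow h' hh'
  linarith
end

section

structure SolP (a b da : ℝ → ℝ) (F Ft Fx Fxx : ℝ → ℝ → ℝ) : Prop extends
    Sol a b da F Ft Fx Fxx where
  pos : ∀ t : ℝ, 0 < t → ∀ x : ℝ, 0 < Fx t x

namespace SolP
variable {a b da : ℝ → ℝ} {F Ft Fx Fxx : ℝ → ℝ → ℝ}

theorem strictMono (h : SolP a b da F Ft Fx Fxx) {t : ℝ} (ht : 0 < t) : StrictMono (F t) :=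
  strictMono_of_hasDerivAt_pos (fun x => h.dx t ht x) (fun x => h.pos t ht x)

theorem cont (h : SolP a b da F Ft Fx Fxx) {t : ℝ} (ht : 0 < t) : Continuous (F t) :=
  continuous_iff_continuousAt.2 fun x => (h.dx t ht x).continuousAt

theorem memIoo (h : SolP a b da F Ft Fx Fxx) {t : ℝ} (ht : 0 < t) (x : ℝ) :
    F t x ∈ Ioo (0:ℝ) 1 :=
  ⟨(h.toSol.mem ht (x-1)).1.trans_lt (h.strictMono ht (by linarith)),
    (h.strictMono ht (show x < x + 1 by linarith)).trans_le (h.toSol.mem ht (x+1)).2⟩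

theorem exists_eq (h : SolP a b da F Ft Fx Fxx) {t : ℝ} (ht : 0 < t) {u : ℝ}
    (hu : u ∈ Ioo (0:ℝ) 1) : ∃ x, F t x = u := by
  obtain ⟨x1, h1⟩ := ((h.bot t ht).eventually (gt_mem_nhds hu.1)).exists
  obtain ⟨x2, h2⟩ := ((h.top t ht).eventually (lt_mem_nhds hu.2)).exists
  exact mem_range_of_exists_le_of_exists_ge (h.cont ht) ⟨x1, h1.le⟩ ⟨x2, h2.le⟩

theorem pinv_F (h : SolP a b da F Ft Fx Fxx) {t : ℝ} (ht : 0 < t) (x : ℝ) :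
    pinv (F t) (F t x) = x := by
  have : {y : ℝ | F t x < F t y} = Ioi x := by
    ext y; simp [(h.strictMono ht).lt_iff_lt]
  rw [pinv, this, csInf_Ioi]

theorem F_pinv (h : SolP a b da F Ft Fx Fxx) {t : ℝ} (ht : 0 < t) {u : ℝ}
    (hu : u ∈ Ioo (0:ℝ) 1) : F t (pinv (F t) u) = u := by
  obtain ⟨x, rfl⟩ := h.exists_eq ht hu
  rw [h.pinv_F ht]

theorem pinv_lt_iff (h : SolP a b da F Ft Fx Fxx) {t : ℝ} (ht : 0 < t) {u x : ℝ}
    (hu : u ∈ Ioo (0:ℝ) 1) : pinv (F t) u < x ↔ u < F t x := by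
  rw [← (h.strictMono ht).lt_iff_lt, h.F_pinv ht hu]

theorem lt_pinv_iff (h : SolP a b da F Ft Fx Fxx) {t : ℝ} (ht : 0 < t) {u x : ℝ}
    (hu : u ∈ Ioo (0:ℝ) 1) : x < pinv (F t) u ↔ F t x < u := by
  rw [← (h.strictMono ht).lt_iff_lt (b := pinv (F t) u), h.F_pinv ht hu]

theorem cont_t (h : SolP a b da F Ft Fx Fxx) {t : ℝ} (ht : 0 < t) (x : ℝ) :
    ContinuousAt (fun s => F s x) t := (h.dt t ht x).continuousAt

theorem cX (h : SolP a b da F Ft Fx Fxx) :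
    ContinuousOn (fun q : ℝ × ℝ => pinv (F q.1) q.2) (Ioi 0 ×ˢ Ioo 0 1) := by
  rintro ⟨t, u⟩ ⟨ht, hu⟩
  simp only [mem_Ioi] at ht
  simp only at hu
  have hnear : ∀ᶠ q : ℝ × ℝ in 𝓝[Ioi 0 ×ˢ Ioo 0 1] (t, u), q ∈ Ioi (0:ℝ) ×ˢ Ioo (0:ℝ) 1 :=
    self_mem_nhdsWithin
  have c1 : ∀ x, ContinuousAt (fun q : ℝ × ℝ => F q.1 x - q.2) (t, u) := fun x =>
    (ContinuousAt.comp (f := Prod.fst) (x := (t, u)) (h.cont_t ht x) continuousAt_fst).sub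
      continuousAt_snd
  rw [ContinuousWithinAt, tendsto_order]
  constructor
  · intro x hx
    rw [h.lt_pinv_iff ht hu] at hx
    have : ∀ᶠ q : ℝ × ℝ in 𝓝 (t, u), F q.1 x - q.2 < 0 :=
      (c1 x).eventually (gt_mem_nhds (show F t x - u < 0 by linarith))
    filter_upwards [this.filter_mono nhdsWithin_le_nhds, hnear] with q hq hq2
    rw [h.lt_pinv_iff hq2.1 hq2.2]; linarith
  · intro x hx
    replace hx : pinv (F t) u < x := hx
    rw [h.pinv_lt_iff ht hu] at hx
    have : ∀ᶠ q : ℝ × ℝ in 𝓝 (t, u), 0 < F q.1 x - q.2 :=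
      (c1 x).eventually (lt_mem_nhds (show 0 < F t x - u by linarith))
    filter_upwards [this.filter_mono nhdsWithin_le_nhds, hnear] with q hq hq2
    rw [h.pinv_lt_iff hq2.1 hq2.2]; linarith

theorem comp_cX (h : SolP a b da F Ft Fx Fxx) {H : ℝ → ℝ → ℝ}
    (hH : ContinuousOn (fun q : ℝ × ℝ => H q.1 q.2) (Set.Ioi 0 ×ˢ (Set.univ : Set ℝ))) :
    ContinuousOn (fun q : ℝ × ℝ => H q.1 (pinv (F q.1) q.2)) (Ioi 0 ×ˢ Ioo 0 1) :=
  hH.comp (f := fun q : ℝ × ℝ => (q.1, pinv (F q.1) q.2)) (continuousOn_fst.prodMk h.cX)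
    (fun _ hq => ⟨hq.1, mem_univ _⟩)

theorem cX_u (h : SolP a b da F Ft Fx Fxx) {t : ℝ} (ht : 0 < t) :
    ContinuousOn (fun u => pinv (F t) u) (Ioo 0 1) :=
  h.cX.comp (f := fun u : ℝ => (t, u)) (by fun_prop) (fun u hu => ⟨ht, hu⟩)

theorem dX_u (h : SolP a b da F Ft Fx Fxx) {t : ℝ} (ht : 0 < t) {u : ℝ}
    (hu : u ∈ Ioo (0:ℝ) 1) :
    HasDerivAt (fun v => pinv (F t) v) (Fx t (pinv (F t) u))⁻¹ u := by
  refine HasDerivAt.of_local_left_inverse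
    ((h.cX_u ht).continuousAt (isOpen_Ioo.mem_nhds hu)) (h.dx t ht _) (h.pos t ht _).ne' ?_
  filter_upwards [isOpen_Ioo.mem_nhds hu] with v hv using h.F_pinv ht hv

theorem dX_t (h : SolP a b da F Ft Fx Fxx) {t : ℝ} (ht : 0 < t) {u : ℝ}
    (hu : u ∈ Ioo (0:ℝ) 1) :
    HasDerivAt (fun s => pinv (F s) u)
      (-(Ft t (pinv (F t) u) / Fx t (pinv (F t) u))) t := by
  set x₀ := pinv (F t) u with hx₀
  have hXc : ContinuousAt (fun s => pinv (F s) u) t :=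
    ContinuousOn.continuousAt (s := Ioi 0)
      (h.cX.comp (f := fun s : ℝ => (s, u)) (by fun_prop) (fun s hs => ⟨hs, hu⟩))
      (Ioi_mem_nhds ht)
  -- mean value points
  have hmv : ∀ s : ℝ, ∃ ξ, |ξ - x₀| ≤ |pinv (F s) u - x₀| ∧ (0 < s →
      F s (pinv (F s) u) - F s x₀ = Fx s ξ * (pinv (F s) u - x₀)) := by
    intro s
    by_cases hs : 0 < s
    · rcases lt_trichotomy (pinv (F s) u) x₀ with hlt | heq | hgt
      · obtain ⟨ξ, hξ, he⟩ := exists_hasDerivAt_eq_slope (F s) (Fx s) hlt (h.cont hs).continuousOn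
          (fun x _ => h.dx s hs x)
        refine ⟨ξ, ?_, fun _ => ?_⟩
        · rw [abs_of_nonpos (by linarith [hξ.2]), abs_of_nonpos (by linarith)]
          linarith [hξ.1]
        · rw [he]; field_simp [(sub_pos.2 hlt).ne']; ring
      · exact ⟨x₀, by simp, fun _ => by rw [heq]; simp⟩
      · obtain ⟨ξ, hξ, he⟩ := exists_hasDerivAt_eq_slope (F s) (Fx s) hgt (h.cont hs).continuousOn
          (fun x _ => h.dx s hs x)
        refine ⟨ξ, ?_, fun _ => ?_⟩
        · rw [abs_of_nonneg (by linarith [hξ.1]), abs_of_nonneg (by linarith)]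
          linarith [hξ.2]
        · rw [he]; field_simp [(sub_pos.2 hgt).ne']
    · exact ⟨x₀, by simp, fun h0 => absurd h0 hs⟩
  choose ξ hξ1 hξ2 using hmv
  have hξlim : Tendsto ξ (𝓝 t) (𝓝 x₀) := by
    rw [tendsto_iff_norm_sub_tendsto_zero]
    have h2 : Tendsto (fun s => |pinv (F s) u - x₀|) (𝓝 t) (𝓝 0) := by
      have : Tendsto (fun s => |pinv (F s) u - x₀|) (𝓝 t) (𝓝 |pinv (F t) u - x₀|) :=
        (hXc.tendsto.sub_const x₀).abs
      simpa [hx₀] using this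
    exact squeeze_zero (fun s => norm_nonneg _) hξ1 h2
  have hFxlim : Tendsto (fun s => Fx s (ξ s)) (𝓝 t) (𝓝 (Fx t x₀)) := by
    have c := h.cFx.continuousAt (x := (t, x₀))
      ((isOpen_Ioi.prod isOpen_univ).mem_nhds ⟨ht, mem_univ _⟩)
    exact (ContinuousAt.tendsto c).comp (tendsto_id.prodMk_nhds hξlim)
  have hslope := (h.dt t ht x₀)
  rw [hasDerivAt_iff_tendsto_slope] at hslope ⊢
  have hlim := (hslope.div (hFxlim.mono_left nhdsWithin_le_nhds) (h.pos t ht x₀).ne').neg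
  refine hlim.congr' ?_
  filter_upwards [self_mem_nhdsWithin, nhdsWithin_le_nhds (Ioi_mem_nhds ht)] with s hs hs0
  have hs' : s - t ≠ 0 := sub_ne_zero.2 hs
  have e1 := hξ2 s hs0
  rw [h.F_pinv hs0 hu] at e1
  have e2 : F t x₀ = u := h.F_pinv ht hu
  have hp := (h.pos s hs0 (ξ s)).ne'
  simp only [Pi.div_apply]
  rw [slope_def_field, slope_def_field, e2]
  have : pinv (F s) u - pinv (F t) u = (u - F s x₀) / Fx s (ξ s) := by
    rw [eq_div_iff hp, e1]; ring
  rw [this]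
  field_simp
  ring

end SolP
end

section

theorem weak_bump {a b : ℝ → ℝ} (ha : ContinuousOn a (Icc 0 1)) (hb : ContinuousOn b (Icc 0 1))
    {C : ℝ} (haC : ∀ u ∈ Icc (0:ℝ) 1, |a u| ≤ C) (hbC : ∀ u ∈ Icc (0:ℝ) 1, |b u| ≤ C)
    {F₀ : ℝ → ℝ} {F : ℝ → ℝ → ℝ} (hF : IsWeakSolution (primitive a) (primitive b) F₀ F)
    (cF : ContinuousOn (fun q : ℝ × ℝ => F q.1 q.2) (Set.Ioi 0 ×ˢ (Set.univ : Set ℝ)))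
    (hmem : ∀ t, 0 < t → ∀ x, F t x ∈ Icc (0:ℝ) 1)
    {ψ : ℝ → ℝ} (hψ : ContDiff ℝ (⊤ : ℕ∞) ψ) (hψc : HasCompactSupport ψ)
    {e : ℝ} (he : e ∈ Icc (0:ℝ) 1) {κ t : ℝ} (ht : 0 ≤ t)
    (hκ : ∀ s ∈ Ioc 0 t, ∀ x ∈ tsupport ψ, |F s x - e| ≤ κ) :
    |(∫ x, ψ x * F t x) - ∫ x, ψ x * F₀ x| ≤
      t * (C * κ) * ((∫ x, |deriv (deriv ψ) x|) + ∫ x, |deriv ψ x|) := by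
  have hC0 : 0 ≤ C := (abs_nonneg _).trans (haC 0 ⟨le_rfl, zero_le_one⟩)
  have hψ1 : ContDiff ℝ (⊤ : ℕ∞) (deriv ψ) :=
    ((contDiff_infty_iff_deriv (f := ψ)).1 hψ).2
  have hψ2 : ContDiff ℝ (⊤ : ℕ∞) (deriv (deriv ψ)) :=
    ((contDiff_infty_iff_deriv (f := deriv ψ)).1 hψ1).2
  have c1 : HasCompactSupport (deriv ψ) := hψc.deriv
  have c2 : HasCompactSupport (deriv (deriv ψ)) := c1.deriv
  have i0 : Integrable ψ := hψ.continuous.integrable_of_hasCompactSupport hψc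
  have i1 : Integrable (deriv ψ) := hψ1.continuous.integrable_of_hasCompactSupport c1
  have i2 : Integrable (deriv (deriv ψ)) := hψ2.continuous.integrable_of_hasCompactSupport c2
  have z1 : ∫ x, deriv ψ x = 0 := integral_eq_zero_of_hasDerivAt_of_integrable
    (fun x => (hψ.differentiable (by simp) x).hasDerivAt) i1 i0
  have z2 : ∫ x, deriv (deriv ψ) x = 0 := integral_eq_zero_of_hasDerivAt_of_integrable
    (fun x => (hψ1.differentiable (by simp) x).hasDerivAt) i2 i1
  let θ : ContDiffBump (0:ℝ) := ⟨t + 1, t + 2, by linarith, by linarith⟩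
  have hθ1 : ∀ s ∈ Icc 0 t, ∀ᶠ r in 𝓝 s, θ r = 1 := by
    intro s hs
    have : Metric.ball (0:ℝ) (t+1) ∈ 𝓝 s := Metric.isOpen_ball.mem_nhds (by
      rw [Metric.mem_ball, Real.dist_eq, sub_zero, abs_of_nonneg hs.1]; linarith [hs.2])
    filter_upwards [this] with r hr
    exact θ.one_of_mem_closedBall (Metric.ball_subset_closedBall hr)
  set g : ℝ → ℝ → ℝ := fun s x => θ s * ψ x with hg
  have hw := hF g (by
      have : Function.uncurry g = fun q : ℝ × ℝ => θ q.1 * ψ q.2 := rfl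
      rw [this]
      exact (θ.contDiff.comp contDiff_fst).mul (hψ.comp contDiff_snd)) (by
      refine HasCompactSupport.intro (K := tsupport θ ×ˢ tsupport ψ)
        (θ.hasCompactSupport.isCompact.prod hψc.isCompact) ?_
      rintro ⟨s, x⟩ hsx
      simp only [Function.uncurry, hg]
      by_cases h1 : s ∈ tsupport θ
      · have h2 : x ∉ tsupport ψ := fun h2 => hsx ⟨h1, h2⟩
        rw [image_eq_zero_of_notMem_tsupport h2, mul_zero]
      · rw [image_eq_zero_of_notMem_tsupport h1, zero_mul]) t ht
  have g1 : ∀ s ∈ Icc 0 t, g s = ψ := fun s hs => by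
    funext x; simp [hg, (hθ1 s hs).self_of_nhds]
  rw [g1 t ⟨ht, le_rfl⟩, g1 0 ⟨le_rfl, ht⟩] at hw
  rw [hw]
  set A := primitive a
  set B := primitive b
  set k : ℝ → ℝ → ℝ := fun s x => 1/2 * (A (F s x) - A e) * deriv (deriv ψ) x
    + (B (F s x) - B e) * deriv ψ x with hk
  have hAc : ContinuousOn (fun q : ℝ × ℝ => A (F q.1 q.2)) (Ioi 0 ×ˢ univ) :=
    (primitive_cont ha).comp cF (fun q hq => hmem q.1 hq.1 q.2)
  have hBc : ContinuousOn (fun q : ℝ × ℝ => B (F q.1 q.2)) (Ioi 0 ×ˢ univ) :=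
    (primitive_cont hb).comp cF (fun q hq => hmem q.1 hq.1 q.2)
  have hkc : ContinuousOn (fun q : ℝ × ℝ => k q.1 q.2) (Ioi 0 ×ˢ univ) := by
    simp only [hk]
    have d1 := hψ1.continuous
    have d2 := hψ2.continuous
    exact ((continuousOn_const.mul (hAc.sub continuousOn_const)).mul
      (d2.comp continuous_snd).continuousOn).add ((hBc.sub continuousOn_const).mul
      (d1.comp continuous_snd).continuousOn)
  have hkx : ∀ x, ContinuousOn (fun s => k s x) (Ioi 0) := fun x =>
    hkc.comp (f := fun s : ℝ => (s, x)) (by fun_prop) (fun s hs => ⟨hs, mem_univ _⟩)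
  have hkb : ∀ s ∈ Ioc 0 t, ∀ x, ‖k s x‖ ≤ C * κ * (|deriv (deriv ψ) x| + |deriv ψ x|) := by
    intro s hs x
    by_cases hx : x ∈ tsupport ψ
    · have hFe := hκ s hs x hx
      have hA := primitive_lip ha haC (hmem s hs.1 x) he
      have hB := primitive_lip hb hbC (hmem s hs.1 x) he
      have hA' : |A (F s x) - A e| ≤ C * κ := hA.trans (by gcongr)
      have hB' : |B (F s x) - B e| ≤ C * κ := hB.trans (by gcongr)
      simp only [hk, Real.norm_eq_abs]
      refine (abs_add_le _ _).trans ?_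
      rw [abs_mul, abs_mul, abs_mul]
      have h1 : |(1/2:ℝ)| = 1/2 := by norm_num
      rw [h1]
      have n1 := abs_nonneg (deriv (deriv ψ) x)
      have n2 := abs_nonneg (deriv ψ x)
      have m1 := mul_le_mul_of_nonneg_right hA' n1
      have m2 := mul_le_mul_of_nonneg_right hB' n2
      have m3 := mul_nonneg (abs_nonneg (A (F s x) - A e)) n1
      linarith
    · have h1 : deriv ψ x = 0 := image_eq_zero_of_notMem_tsupport
        (fun h => hx (tsupport_deriv_subset h))
      have h2 : deriv (deriv ψ) x = 0 := image_eq_zero_of_notMem_tsupport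
        (fun h => hx (tsupport_deriv_subset (tsupport_deriv_subset h)))
      simp [hk, h1, h2]
  have hki : ∀ x, IntervalIntegrable (fun s => k s x) volume 0 t := by
    intro x
    rw [intervalIntegrable_iff_integrableOn_Ioc_of_le ht]
    refine Integrable.of_bound (C := C * κ * (|deriv (deriv ψ) x| + |deriv ψ x|))
      (((hkx x).mono (fun s hs => hs.1)).aestronglyMeasurable measurableSet_Ioc) ?_
    filter_upwards [ae_restrict_mem measurableSet_Ioc] with s hs using hkb s hs x
  set J : ℝ → ℝ := fun x => ∫ s in (0:ℝ)..t, k s x with hJ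
  have hJb : ∀ x, ‖J x‖ ≤ t * (C * κ) * (|deriv (deriv ψ) x| + |deriv ψ x|) := by
    intro x
    have := intervalIntegral.norm_integral_le_of_norm_le_const (a := 0) (b := t)
      (f := fun s => k s x) (C := C * κ * (|deriv (deriv ψ) x| + |deriv ψ x|))
      (fun s hs => hkb s (by rwa [uIoc_of_le ht] at hs) x)
    rw [sub_zero, abs_of_nonneg ht] at this
    refine this.trans (le_of_eq ?_); ring
  have hbi : Integrable (fun x => t * (C * κ) * (|deriv (deriv ψ) x| + |deriv ψ x|)) :=
    (i2.abs.add i1.abs).const_mul _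
  have hJm : AEStronglyMeasurable J volume := by
    have h1 : AEStronglyMeasurable (fun q : ℝ × ℝ => k q.2 q.1)
        ((volume : Measure ℝ).prod (volume.restrict (Ioc 0 t))) := by
      rw [← Measure.restrict_univ (μ := (volume : Measure ℝ)), Measure.prod_restrict]
      rw [Measure.restrict_univ]
      refine ContinuousOn.aestronglyMeasurable ?_ (MeasurableSet.univ.prod measurableSet_Ioc)
      exact hkc.comp (f := fun q : ℝ × ℝ => (q.2, q.1)) (by fun_prop)
        (fun q hq => ⟨hq.2.1, mem_univ _⟩)
    have h2 := h1.integral_prod_right'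
    have : J = fun x => ∫ s, k s x ∂(volume.restrict (Ioc 0 t)) := by
      funext x; rw [hJ]; simp only; rw [intervalIntegral.integral_of_le ht]
    rw [this]; exact h2
  have hJi : Integrable J := hbi.mono' hJm (Eventually.of_forall hJb)
  have hrhs : ∀ x, (∫ s in (0:ℝ)..t, ((1/2) * A (F s x) * deriv (deriv (fun y => g s y)) x
            + B (F s x) * deriv (fun y => g s y) x
            + F s x * deriv (fun r => g r x) s)) =
      J x + (t * (1/2 * A e) * deriv (deriv ψ) x + t * B e * deriv ψ x) := by
    intro x
    have h1 : (∫ s in (0:ℝ)..t, ((1/2) * A (F s x) * deriv (deriv (fun y => g s y)) x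
            + B (F s x) * deriv (fun y => g s y) x
            + F s x * deriv (fun r => g r x) s)) =
        ∫ s in (0:ℝ)..t, (k s x + (1/2 * A e * deriv (deriv ψ) x + B e * deriv ψ x)) := by
      refine intervalIntegral.integral_congr fun s hs => ?_
      rw [uIcc_of_le ht] at hs
      have e1 : (fun y => g s y) = ψ := g1 s hs
      have e2 : deriv (fun r => g r x) s = 0 := by
        have : (fun r => g r x) =ᶠ[𝓝 s] fun _ => ψ x := by
          filter_upwards [hθ1 s hs] with r hr
          simp [hg, hr]
        rw [this.deriv_eq, deriv_const]
      rw [e1, e2]; simp only [hk]; ring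
    rw [h1, intervalIntegral.integral_add (hki x) (by simp)]
    simp only [intervalIntegral.integral_const, sub_zero, smul_eq_mul, hJ]
    ring
  simp_rw [hrhs]
  have hi : Integrable (fun x => t * (1/2 * A e) * deriv (deriv ψ) x + t * B e * deriv ψ x) :=
    (i2.const_mul _).add (i1.const_mul _)
  rw [integral_add hJi hi,
    integral_add (i2.const_mul _) (i1.const_mul _), integral_const_mul, integral_const_mul, z1, z2,
    mul_zero, mul_zero, add_zero, add_zero]
  have := norm_integral_le_of_norm_le hbi (Eventually.of_forall hJb)
  rw [integral_const_mul, integral_add i2.abs i1.abs] at this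
  exact this

theorem bump_mono {ψ f : ℝ → ℝ} (hψ : Continuous ψ) (hψc : HasCompactSupport ψ)
    (h0 : ∀ x, 0 ≤ ψ x) (h1 : ∫ x, ψ x = 1) (hf : Monotone f) (hf01 : ∀ x, f x ∈ Icc (0:ℝ) 1)
    {l m : ℝ} (hs : ∀ x, ψ x ≠ 0 → x ∈ Icc l m) :
    f l ≤ ∫ x, ψ x * f x ∧ ∫ x, ψ x * f x ≤ f m := by
  have i0 : Integrable ψ := hψ.integrable_of_hasCompactSupport hψc
  have i1 : Integrable (fun x => ψ x * f x) :=
    i0.mul_bdd (c := 1) hf.measurable.aestronglyMeasurable (Eventually.of_forall fun x => by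
      rw [Real.norm_eq_abs, abs_of_nonneg (hf01 x).1]; exact (hf01 x).2)
  constructor
  · have : ∫ x, ψ x * f l ≤ ∫ x, ψ x * f x := by
      refine integral_mono (i0.mul_const _) i1 fun x => ?_
      by_cases hx : ψ x = 0
      · simp [hx]
      · exact mul_le_mul_of_nonneg_left (hf (hs x hx).1) (h0 x)
    rwa [integral_mul_const, h1, one_mul] at this
  · have : ∫ x, ψ x * f x ≤ ∫ x, ψ x * f m := by
      refine integral_mono i1 (i0.mul_const _) fun x => ?_
      by_cases hx : ψ x = 0
      · simp [hx]
      · exact mul_le_mul_of_nonneg_left (hf (hs x hx).2) (h0 x)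
    rwa [integral_mul_const, h1, one_mul] at this

/-- scaled bump -/
theorem exists_bump : ∃ K : ℝ, 0 ≤ K ∧ ∀ ρ : ℝ, 1 ≤ |ρ| → ∃ ψ : ℝ → ℝ, ContDiff ℝ (⊤ : ℕ∞) ψ ∧
    HasCompactSupport ψ ∧ (∀ x, 0 ≤ ψ x) ∧ (∫ x, ψ x = 1) ∧
    (∀ x ∈ tsupport ψ, x / ρ ∈ Icc (1:ℝ) 2) ∧
    ((∫ x, |deriv (deriv ψ) x|) + ∫ x, |deriv ψ x|) ≤ K / |ρ| := by
  let θ : ContDiffBump (3/2:ℝ) := ⟨1/4, 1/2, by norm_num, by norm_num⟩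
  set ψ₀ : ℝ → ℝ := θ.normed volume with hψ₀
  set K₁ := ∫ x, |deriv ψ₀ x|
  set K₂ := ∫ x, |deriv (deriv ψ₀) x|
  have hK₁ : 0 ≤ K₁ := integral_nonneg fun x => abs_nonneg _
  have hK₂ : 0 ≤ K₂ := integral_nonneg fun x => abs_nonneg _
  refine ⟨K₂ + K₁, by positivity, fun ρ hρ => ?_⟩
  have hρ0 : 0 < |ρ| := by linarith
  have hρ' : ρ ≠ 0 := abs_pos.1 hρ0
  set ψ : ℝ → ℝ := fun x => |ρ|⁻¹ * ψ₀ (ρ⁻¹ * x) with hψ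
  have hsupp : ∀ x, ψ x ≠ 0 → x / ρ ∈ Icc (1:ℝ) 2 := by
    intro x hx
    have h1 : ψ₀ (ρ⁻¹ * x) ≠ 0 := fun h => hx (by simp [hψ, h])
    have h2 : ρ⁻¹ * x ∈ Function.support ψ₀ := h1
    rw [hψ₀, θ.support_normed_eq, Metric.mem_ball, Real.dist_eq, abs_lt] at h2
    have h3 : x / ρ = ρ⁻¹ * x := by ring
    have h4 : θ.rOut = 1/2 := rfl
    rw [h3]; rw [h4] at h2
    exact ⟨by linarith [h2.1], by linarith [h2.2]⟩
  have hcl : IsClosed {x : ℝ | x / ρ ∈ Icc (1:ℝ) 2} :=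
    isClosed_Icc.preimage (continuous_id.div_const ρ)
  have hts : ∀ x ∈ tsupport ψ, x / ρ ∈ Icc (1:ℝ) 2 := fun x hx =>
    closure_minimal (fun y hy => hsupp y hy) hcl hx
  have hsm : ContDiff ℝ (⊤ : ℕ∞) ψ := by
    exact contDiff_const.mul (θ.contDiff_normed.comp (contDiff_const.mul contDiff_id))
  have d1 : deriv ψ = fun x => |ρ|⁻¹ * (ρ⁻¹ * deriv ψ₀ (ρ⁻¹ * x)) := by
    funext x
    rw [hψ, deriv_const_mul_field]
    congr 1
    rw [deriv_comp_mul_left]; rfl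
  have d2 : deriv (deriv ψ) = fun x => |ρ|⁻¹ * (ρ⁻¹ * (ρ⁻¹ * deriv (deriv ψ₀) (ρ⁻¹ * x))) := by
    funext x
    rw [d1, deriv_const_mul_field, deriv_const_mul_field]
    congr 2
    rw [deriv_comp_mul_left (f := deriv ψ₀)]; rfl
  have sc : ∀ h : ℝ → ℝ, ∫ x, h (ρ⁻¹ * x) = |ρ| * ∫ x, h x := fun h => by
    rw [Measure.integral_comp_mul_left, inv_inv, smul_eq_mul]
  refine ⟨ψ, hsm, ?_, ?_, ?_, hts, ?_⟩
  · refine HasCompactSupport.of_support_subset_isCompact (K := Icc (-(2*|ρ|)) (2*|ρ|)) isCompact_Icc ?_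
    intro x hx
    have h1 := hsupp x hx
    have h2 : |x| ≤ 2 * |ρ| := by
      have : |x| = |x / ρ| * |ρ| := by rw [← abs_mul, div_mul_cancel₀ _ hρ']
      rw [this]
      gcongr
      exact abs_le.2 ⟨by linarith [h1.1], h1.2⟩
    exact abs_le.1 h2
  · intro x
    exact mul_nonneg (by positivity) (θ.nonneg_normed _)
  · rw [hψ, integral_const_mul, sc ψ₀, hψ₀, θ.integral_normed, mul_one, inv_mul_cancel₀ hρ0.ne']
  · have e1 : ∫ x, |deriv ψ x| = |ρ|⁻¹ * K₁ := by
      rw [d1]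
      simp only [abs_mul, abs_inv, abs_abs]
      rw [integral_const_mul, integral_const_mul, sc (fun x => |deriv ψ₀ x|)]
      field_simp; rfl
    have e2 : ∫ x, |deriv (deriv ψ) x| = |ρ|⁻¹ * (|ρ|⁻¹ * K₂) := by
      rw [d2]
      simp only [abs_mul, abs_inv, abs_abs]
      rw [integral_const_mul, integral_const_mul, integral_const_mul,
        sc (fun x => |deriv (deriv ψ₀) x|)]
      field_simp; rfl
    rw [e1, e2]
    have h1 : |ρ|⁻¹ ≤ 1 := inv_le_one_of_one_le₀ hρ
    have h2 : |ρ|⁻¹ * K₂ ≤ K₂ := mul_le_of_le_one_left hK₂ h1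
    have h3 : |ρ|⁻¹ * (|ρ|⁻¹ * K₂) ≤ |ρ|⁻¹ * K₂ := by gcongr
    calc _ ≤ |ρ|⁻¹ * K₂ + |ρ|⁻¹ * K₁ := by linarith
      _ = _ := by rw [← mul_add, div_eq_inv_mul]

theorem tail_iter {H0 : ℝ → ℝ} {H : ℝ → ℝ → ℝ} {T K q : ℝ} (hK : 0 ≤ K) (hq : 0 ≤ q)
    (hH : ∀ s ∈ Ioc 0 T, ∀ r, 1 ≤ r → 0 ≤ H s r ∧ H s r ≤ 1)
    (step : ∀ r, 1 ≤ r → ∀ κ, (∀ s ∈ Ioc 0 T, H s r ≤ κ) →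
      ∀ t ∈ Ioc 0 T, H t (2 * r) ≤ H0 r + K * κ / r)
    (h0 : Tendsto (fun r => r ^ q * H0 r) atTop (𝓝 0)) :
    ∀ ε > 0, ∀ᶠ r in atTop, ∀ s ∈ Ioc 0 T, r ^ q * H s r ≤ ε := by
  -- one step
  have one : ∀ m m' C : ℝ, 0 ≤ m → 0 ≤ m' → m' ≤ q → 
      (∀ᶠ r in atTop, ∀ s ∈ Ioc 0 T, r ^ m * H s r ≤ C) →
      ∀ᶠ r in atTop, ∀ s ∈ Ioc 0 T, (2 * r) ^ m' * H s (2 * r) ≤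
        2 ^ m' * (|r ^ q * H0 r| + K * C * r ^ (m' - m - 1)) := by
    intro m m' C hm hm' hmq hC
    filter_upwards [hC, eventually_ge_atTop 1] with r hr hr1 s hs
    have hr0 : 0 < r := by linarith
    have hκ : ∀ s ∈ Ioc 0 T, H s r ≤ C * r ^ (-m) := by
      intro s hs
      have := hr s hs
      rw [Real.rpow_neg hr0.le, ← div_eq_mul_inv, le_div_iff₀ (Real.rpow_pos_of_pos hr0 _)]
      linarith
    have h1 := step r hr1 _ hκ s hs
    have h2 : r ^ m' * H0 r ≤ |r ^ q * H0 r| := by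
      rw [abs_mul, abs_of_pos (Real.rpow_pos_of_pos hr0 q)]
      have : r ^ m' ≤ r ^ q := Real.rpow_le_rpow_of_exponent_le hr1 hmq
      calc r ^ m' * H0 r ≤ r ^ m' * |H0 r| := by gcongr; exact le_abs_self _
        _ ≤ _ := by gcongr
    rw [Real.mul_rpow (by norm_num) hr0.le, mul_assoc]
    gcongr
    calc r ^ m' * H s (2 * r) ≤ r ^ m' * (H0 r + K * (C * r ^ (-m)) / r) := by gcongr
      _ = r ^ m' * H0 r + K * C * (r ^ m' * r ^ (-m) * r ^ (-1:ℝ)) := by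
          rw [Real.rpow_neg_one]; ring
      _ = r ^ m' * H0 r + K * C * r ^ (m' - m - 1) := by
          rw [← Real.rpow_add hr0, ← Real.rpow_add hr0]; congr 3
      _ ≤ _ := by gcongr
  have half : ∀ {P : ℝ → Prop}, (∀ᶠ r in atTop, P (2 * r)) → ∀ᶠ r in atTop, P r := by
    intro P hP
    have : Tendsto (fun r : ℝ => r / 2) atTop atTop := tendsto_id.atTop_div_const (by norm_num)
    filter_upwards [this.eventually hP] with r hr
    rwa [mul_div_cancel₀ _ (by norm_num : (2:ℝ) ≠ 0)] at hr
  have hbd : ∀ k : ℕ, ∃ C, 0 ≤ C ∧ ∀ᶠ r in atTop, ∀ s ∈ Ioc 0 T, r ^ (min (k:ℝ) q) * H s r ≤ C := by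
    intro k
    induction k with
    | zero =>
      refine ⟨1, by norm_num, ?_⟩
      filter_upwards [eventually_ge_atTop 1] with r hr s hs
      rw [Nat.cast_zero, min_eq_left hq, Real.rpow_zero, one_mul]
      exact (hH s hs r hr).2
    | succ k ih =>
      obtain ⟨C, hC0, hC⟩ := ih
      have hm : 0 ≤ min (k:ℝ) q := le_min (by positivity) hq
      have hm' : 0 ≤ min ((k+1:ℕ):ℝ) q := le_min (by positivity) hq
      refine ⟨2 ^ (min ((k+1:ℕ):ℝ) q) * (1 + K * C), by positivity, half ?_⟩
      have hb : ∀ᶠ r in atTop, |r ^ q * H0 r| < 1 := by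
        have := h0.abs
        rw [abs_zero] at this
        exact this.eventually (gt_mem_nhds one_pos)
      filter_upwards [one _ _ C hm hm' (min_le_right _ _) hC, hb, eventually_ge_atTop 1]
        with r h1 h2 h3 s hs
      refine (h1 s hs).trans ?_
      have h4 : r ^ (min ((k+1:ℕ):ℝ) q - min (k:ℝ) q - 1) ≤ 1 := by
        refine Real.rpow_le_one_of_one_le_of_nonpos h3 ?_
        push_cast
        have : min ((k:ℝ)+1) q ≤ min (k:ℝ) q + 1 := by
          rw [← min_add_add_right]; exact min_le_min le_rfl (by linarith)
        linarith
      have h5 : K * C * r ^ (min ((k+1:ℕ):ℝ) q - min (k:ℝ) q - 1) ≤ K * C :=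
        mul_le_of_le_one_right (by positivity) h4
      gcongr
  obtain ⟨k, hk⟩ := exists_nat_ge q
  obtain ⟨C, hC0, hC⟩ := hbd k
  rw [min_eq_right hk] at hC
  intro ε hε
  refine half ?_
  have lim : Tendsto (fun r : ℝ => 2 ^ q * (|r ^ q * H0 r| + K * C * r ^ (q - q - 1))) atTop (𝓝 0) := by
    have l1 := h0.abs
    rw [abs_zero] at l1
    have l2 : Tendsto (fun r : ℝ => r ^ (q - q - 1)) atTop (𝓝 0) := by
      rw [sub_self, zero_sub]; exact tendsto_rpow_neg_atTop one_pos
    have := (l1.add (l2.const_mul (K * C))).const_mul (2 ^ q)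
    simpa using this
  filter_upwards [one q q C hq hq le_rfl hC, lim.eventually (gt_mem_nhds hε)] with r h1 h2 s hs
  exact (h1 s hs).trans h2.le
end

section

theorem tail_top {a b da : ℝ → ℝ} (ha : ContinuousOn a (Icc 0 1)) (hb : ContinuousOn b (Icc 0 1))
    {C : ℝ} (haC : ∀ u ∈ Icc (0:ℝ) 1, |a u| ≤ C) (hbC : ∀ u ∈ Icc (0:ℝ) 1, |b u| ≤ C)
    {F₀ : ℝ → ℝ} {F Ft Fx Fxx : ℝ → ℝ → ℝ} (hF : IsWeakSolution (primitive a) (primitive b) F₀ F)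
    (h : Sol a b da F Ft Fx Fxx) (hm0 : Monotone F₀) (h01 : ∀ x, F₀ x ∈ Icc (0:ℝ) 1)
    {q T : ℝ} (hq : 0 ≤ q) (hT : 0 < T)
    (h0 : Tendsto (fun r => r ^ q * (1 - F₀ r)) atTop (𝓝 0)) :
    ∀ ε > 0, ∀ᶠ r in atTop, ∀ s ∈ Ioc 0 T, r ^ q * (1 - F s r) ≤ ε := by
  have hC0 : 0 ≤ C := (abs_nonneg _).trans (haC 0 ⟨le_rfl, zero_le_one⟩)
  obtain ⟨K, hK, hbump⟩ := exists_bump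
  refine tail_iter (H0 := fun r => 1 - F₀ r) (H := fun s r => 1 - F s r) (K := T * C * K)
    (by positivity) hq ?_ ?_ h0
  · intro s hs r hr
    have := h.mem hs.1 r
    exact ⟨by linarith [this.2], by linarith [this.1]⟩
  · intro r hr κ hκ t ht
    have hr0 : 0 < r := by linarith
    obtain ⟨ψ, hψ, hψc, hψ0, hψ1, hψs, hψb⟩ := hbump r (by rw [abs_of_pos hr0]; exact hr)
    have hs : ∀ x ∈ tsupport ψ, x ∈ Icc r (2 * r) := by
      intro x hx
      have := hψs x hx
      exact ⟨by have := (le_div_iff₀ hr0).1 this.1; linarith, (div_le_iff₀ hr0).1 this.2⟩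
    have hs' : ∀ x, ψ x ≠ 0 → x ∈ Icc r (2 * r) := fun x hx => hs x (subset_tsupport _ hx)
    have hκ0 : 0 ≤ κ := by
      have h1 := hκ t ht
      have := (h.mem ht.1 r).2
      linarith
    have hw := weak_bump ha hb haC hbC hF h.cF (fun t ht x => h.mem ht x) hψ hψc
      (e := 1) ⟨zero_le_one, le_rfl⟩ (κ := κ) ht.1.le (by
        intro s hst x hx
        have hsT : s ∈ Ioc 0 T := ⟨hst.1, hst.2.trans ht.2⟩
        have h1 := hκ s hsT
        have h2 := h.mono s hsT.1 (hs x hx).1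
        have h3 := (h.mem hsT.1 x).2
        rw [abs_of_nonpos (by linarith)]
        linarith)
    have b1 := (bump_mono hψ.continuous hψc hψ0 hψ1 (h.mono t ht.1) (fun x => h.mem ht.1 x) hs').2
    have b2 := (bump_mono hψ.continuous hψc hψ0 hψ1 hm0 h01 hs').1
    have hle : t * (C * κ) * ((∫ x, |deriv (deriv ψ) x|) + ∫ x, |deriv ψ x|) ≤
        T * C * K * κ / r := by
      rw [abs_of_pos hr0] at hψb
      calc _ ≤ T * (C * κ) * (K / r) := by
            have := ht.1.le
            have := ht.2
            have n : 0 ≤ (∫ x, |deriv (deriv ψ) x|) + ∫ x, |deriv ψ x| :=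
              add_nonneg (integral_nonneg fun x => abs_nonneg _)
                (integral_nonneg fun x => abs_nonneg _)
            gcongr
        _ = _ := by ring
    have := (abs_le.1 (hw.trans hle)).1
    show 1 - F t (2 * r) ≤ 1 - F₀ r + T * C * K * κ / r
    linarith

theorem tail_bot {a b da : ℝ → ℝ} (ha : ContinuousOn a (Icc 0 1)) (hb : ContinuousOn b (Icc 0 1))
    {C : ℝ} (haC : ∀ u ∈ Icc (0:ℝ) 1, |a u| ≤ C) (hbC : ∀ u ∈ Icc (0:ℝ) 1, |b u| ≤ C)
    {F₀ : ℝ → ℝ} {F Ft Fx Fxx : ℝ → ℝ → ℝ} (hF : IsWeakSolution (primitive a) (primitive b) F₀ F)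
    (h : Sol a b da F Ft Fx Fxx) (hm0 : Monotone F₀) (h01 : ∀ x, F₀ x ∈ Icc (0:ℝ) 1)
    {q T : ℝ} (hq : 0 ≤ q) (hT : 0 < T)
    (h0 : Tendsto (fun r => r ^ q * F₀ (-r)) atTop (𝓝 0)) :
    ∀ ε > 0, ∀ᶠ r in atTop, ∀ s ∈ Ioc 0 T, r ^ q * F s (-r) ≤ ε := by
  have hC0 : 0 ≤ C := (abs_nonneg _).trans (haC 0 ⟨le_rfl, zero_le_one⟩)
  obtain ⟨K, hK, hbump⟩ := exists_bump
  refine tail_iter (H0 := fun r => F₀ (-r)) (H := fun s r => F s (-r)) (K := T * C * K)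
    (by positivity) hq ?_ ?_ h0
  · intro s hs r hr
    exact h.mem hs.1 (-r)
  · intro r hr κ hκ t ht
    have hr0 : 0 < r := by linarith
    obtain ⟨ψ, hψ, hψc, hψ0, hψ1, hψs, hψb⟩ := hbump (-r) (by rw [abs_neg, abs_of_pos hr0]; exact hr)
    have hs : ∀ x ∈ tsupport ψ, x ∈ Icc (-(2 * r)) (-r) := by
      intro x hx
      have := hψs x hx
      rw [div_neg, ← neg_div] at this
      have h1 := (le_div_iff₀ hr0).1 this.1
      have h2 := (div_le_iff₀ hr0).1 this.2
      exact ⟨by linarith, by linarith⟩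
    have hs' : ∀ x, ψ x ≠ 0 → x ∈ Icc (-(2 * r)) (-r) := fun x hx => hs x (subset_tsupport _ hx)
    have hκ0 : 0 ≤ κ := (h.mem ht.1 (-r)).1.trans (hκ t ht)
    have hw := weak_bump ha hb haC hbC hF h.cF (fun t ht x => h.mem ht x) hψ hψc
      (e := 0) ⟨le_rfl, zero_le_one⟩ (κ := κ) ht.1.le (by
        intro s hst x hx
        have hsT : s ∈ Ioc 0 T := ⟨hst.1, hst.2.trans ht.2⟩
        have h1 := hκ s hsT
        have h2 := h.mono s hsT.1 (hs x hx).2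
        have h3 := (h.mem hsT.1 x).1
        rw [sub_zero, abs_of_nonneg h3]
        linarith)
    have b1 := (bump_mono hψ.continuous hψc hψ0 hψ1 (h.mono t ht.1) (fun x => h.mem ht.1 x) hs').1
    have b2 := (bump_mono hψ.continuous hψc hψ0 hψ1 hm0 h01 hs').2
    have hle : t * (C * κ) * ((∫ x, |deriv (deriv ψ) x|) + ∫ x, |deriv ψ x|) ≤
        T * C * K * κ / r := by
      rw [abs_neg, abs_of_pos hr0] at hψb
      calc _ ≤ T * (C * κ) * (K / r) := by
            have := ht.1.le
            have := ht.2
            have n : 0 ≤ (∫ x, |deriv (deriv ψ) x|) + ∫ x, |deriv ψ x| :=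
              add_nonneg (integral_nonneg fun x => abs_nonneg _)
                (integral_nonneg fun x => abs_nonneg _)
            gcongr
        _ = _ := by ring
    have := (abs_le.1 (hw.trans hle)).2
    show F t (-(2 * r)) ≤ F₀ (-r) + T * C * K * κ / r
    linarith

/-- The two tail conditions on the initial data, from the `tl` hypotheses. -/
theorem tl_split {f g : ℝ → ℝ} (hf : ∀ x, f x ∈ Icc (0:ℝ) 1) (hg : ∀ x, g x ∈ Icc (0:ℝ) 1) {q : ℝ}
    (h1 : Tendsto (fun x => |x| ^ q * (tl f x + tl g x)) atTop (𝓝 0))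
    (h2 : Tendsto (fun x => |x| ^ q * (tl f x + tl g x)) atBot (𝓝 0)) :
    Tendsto (fun r => r ^ q * (1 - f r)) atTop (𝓝 0) ∧
    Tendsto (fun r => r ^ q * (f (-r))) atTop (𝓝 0) := by
  constructor
  · refine squeeze_zero' ?_ ?_ h1
    · filter_upwards [eventually_gt_atTop 0] with r hr
      exact mul_nonneg (Real.rpow_nonneg hr.le _) (by linarith [(hf r).2])
    · filter_upwards [eventually_gt_atTop 0] with r hr
      rw [abs_of_pos hr]
      have := (hg r).2
      simp only [tl, hr.le, hr.not_ge, if_true, if_false, add_zero]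
      have := Real.rpow_nonneg hr.le q
      gcongr; linarith
  · have h3 := h2.comp tendsto_neg_atTop_atBot
    refine squeeze_zero' ?_ ?_ h3
    · filter_upwards [eventually_gt_atTop 0] with r hr
      exact mul_nonneg (Real.rpow_nonneg hr.le _) (hf _).1
    · filter_upwards [eventually_gt_atTop 0] with r hr
      have := (hg (-r)).1
      have h4 : ¬ (0 ≤ -r) := by linarith
      have h5 : -r ≤ 0 := by linarith
      simp only [Function.comp, tl, h4, h5, if_true, if_false, zero_add, abs_neg, abs_of_pos hr]
      have := Real.rpow_nonneg hr.le q
      gcongr; linarith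
end

section

theorem hasDerivAt_abs_rpow_mul {p : ℝ} (hp : 2 ≤ p) (w : ℝ) :
    HasDerivAt (fun w : ℝ => |w| ^ (p - 2) * w) ((p - 1) * |w| ^ (p - 2)) w := by
  by_cases hw : w = 0
  · subst hw
    rw [hasDerivAt_iff_tendsto_slope]
    have hc : Tendsto (fun w : ℝ => |w| ^ (p - 2)) (𝓝[≠] 0) (𝓝 (|0| ^ (p - 2))) := by
      have : Continuous (fun w : ℝ => |w| ^ (p - 2)) :=
        continuous_abs.rpow_const (fun _ => Or.inr (by linarith))
      exact (this.tendsto 0).mono_left nhdsWithin_le_nhds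
    have e : (p - 1) * |(0:ℝ)| ^ (p - 2) = |0| ^ (p - 2) := by
      rcases hp.eq_or_lt with h | h
      · subst h; norm_num
      · rw [abs_zero, Real.zero_rpow (by linarith), mul_zero]
    rw [e]
    refine hc.congr' ?_
    filter_upwards [self_mem_nhdsWithin] with y hy
    have hy : y ≠ 0 := hy
    rw [slope_def_field]
    simp only [mul_zero, sub_zero]
    rw [mul_div_assoc, div_self hy, mul_one]
  · have h1 : HasDerivAt (fun w : ℝ => |w| ^ (p - 2)) ((p - 2) * |w| ^ (p - 2 - 2) * w) w := by
      have habs : HasDerivAt (fun w : ℝ => |w|) (SignType.sign w : ℝ) w := hasDerivAt_abs hw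
      have := habs.rpow_const (p := p - 2) (Or.inl (abs_pos.2 hw).ne')
      convert this using 1
      have hs : |w| ^ (p - 2 - 1) = |w| ^ (p - 2 - 2) * |w| := by
        rw [← Real.rpow_add_one (abs_pos.2 hw).ne']; congr 1; ring
      rw [hs]
      have : (SignType.sign w : ℝ) * |w| = w := sign_mul_abs w
      linear_combination -(p - 2) * |w| ^ (p - 2 - 2) * this
    have h2 := h1.mul (hasDerivAt_id w)
    refine HasDerivAt.congr_deriv (f' := _) h2 ?_
    have hs : |w| ^ (p - 2) = |w| ^ (p - 2 - 2) * w ^ 2 := by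
      rw [← sq_abs w, ← Real.rpow_natCast, ← Real.rpow_add (abs_pos.2 hw)]; congr 1; push_cast; ring
    show (p - 2) * |w| ^ (p - 2 - 2) * w * w + |w| ^ (p - 2) * 1 = _
    linear_combination -(p - 2) * hs

structure TruncFn (T T1 T2 : ℝ → ℝ) (L : ℝ) : Prop where
  Lpos : 0 < L
  d1 : ∀ x, HasDerivAt T (T1 x) x
  d2 : ∀ x, HasDerivAt T1 (T2 x) x
  c2 : Continuous T2
  top : ∀ x, L ≤ x → T x = T L
  bot : ∀ x, x ≤ -L → T x = T (-L)
  z1 : ∀ x, L ≤ |x| → T1 x = 0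
  z2 : ∀ x, L ≤ |x| → T2 x = 0

def wT (T : ℝ → ℝ) (F G : ℝ → ℝ → ℝ) (q : ℝ × ℝ) : ℝ :=
  T (pinv (F q.1) q.2) - T (pinv (G q.1) q.2)

def disT (p : ℝ) (a T T1 : ℝ → ℝ) (F Fx G Gx : ℝ → ℝ → ℝ) (q : ℝ × ℝ) : ℝ :=
  a q.2 * |wT T F G q| ^ (p - 2) * (T1 (pinv (F q.1) q.2) * T1 (pinv (G q.1) q.2)) *
    ((Fx q.1 (pinv (F q.1) q.2) - Gx q.1 (pinv (G q.1) q.2)) ^ 2 /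
      (Fx q.1 (pinv (F q.1) q.2) * Gx q.1 (pinv (G q.1) q.2)))

def errT (p : ℝ) (a b T T1 T2 : ℝ → ℝ) (F G : ℝ → ℝ → ℝ) (q : ℝ × ℝ) : ℝ :=
  p * (|wT T F G q| ^ (p - 2) * wT T F G q) * wT T1 F G q * b q.2 +
  1/2 * a q.2 * (p * (|wT T F G q| ^ (p - 2) * wT T F G q)) * wT T2 F G q +
  1/2 * a q.2 * (p * (p - 1) * |wT T F G q| ^ (p - 2)) * wT T1 F G q ^ 2

def derT (p : ℝ) (T T1 : ℝ → ℝ) (F Ft Fx G Gt Gx : ℝ → ℝ → ℝ) (q : ℝ × ℝ) : ℝ :=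
  p * |wT T F G q| ^ (p - 2) * wT T F G q *
    (T1 (pinv (F q.1) q.2) * (-(Ft q.1 (pinv (F q.1) q.2) / Fx q.1 (pinv (F q.1) q.2))) -
     T1 (pinv (G q.1) q.2) * (-(Gt q.1 (pinv (G q.1) q.2) / Gx q.1 (pinv (G q.1) q.2))))

section
variable {a b da : ℝ → ℝ} {F Ft Fx Fxx G Gt Gx Gxx : ℝ → ℝ → ℝ} {T T1 T2 : ℝ → ℝ} {L p : ℝ}

theorem TruncFn.c0 (hT : TruncFn T T1 T2 L) : Continuous T :=
  continuous_iff_continuousAt.2 fun x => (hT.d1 x).continuousAt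
theorem TruncFn.c1 (hT : TruncFn T T1 T2 L) : Continuous T1 :=
  continuous_iff_continuousAt.2 fun x => (hT.d2 x).continuousAt

theorem wT_cont (hF : SolP a b da F Ft Fx Fxx) (hG : SolP a b da G Gt Gx Gxx)
    {T : ℝ → ℝ} (hT : Continuous T) : ContinuousOn (wT T F G) (Ioi 0 ×ˢ Ioo 0 1) :=
  (hT.comp_continuousOn hF.cX).sub (hT.comp_continuousOn hG.cX)

theorem wTp_cont (hp : 2 ≤ p) (hF : SolP a b da F Ft Fx Fxx) (hG : SolP a b da G Gt Gx Gxx)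
    {T : ℝ → ℝ} (hT : Continuous T) :
    ContinuousOn (fun q => |wT T F G q| ^ (p - 2)) (Ioi 0 ×ˢ Ioo 0 1) :=
  (wT_cont hF hG hT).abs.rpow_const (fun _ _ => Or.inr (by linarith))

theorem snd_cont {b : ℝ → ℝ} (hb : ContinuousOn b (Icc 0 1)) :
    ContinuousOn (fun q : ℝ × ℝ => b q.2) (Ioi 0 ×ˢ Ioo 0 1) :=
  hb.comp continuousOn_snd (fun q hq => Ioo_subset_Icc_self hq.2)

theorem disT_cont (hp : 2 ≤ p) (ha : ContinuousOn a (Icc 0 1)) (hF : SolP a b da F Ft Fx Fxx)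
    (hG : SolP a b da G Gt Gx Gxx) (hT : Continuous T) (hT1 : Continuous T1) :
    ContinuousOn (disT p a T T1 F Fx G Gx) (Ioi 0 ×ˢ Ioo 0 1) := by
  have f1 := hF.comp_cX hF.cFx
  have g1 := hG.comp_cX hG.cFx
  exact (((snd_cont ha).mul (wTp_cont hp hF hG hT)).mul
    ((hT1.comp_continuousOn hF.cX).mul (hT1.comp_continuousOn hG.cX))).mul
    (((f1.sub g1).pow 2).div (f1.mul g1)
      (fun q hq => (mul_pos (hF.pos _ hq.1 _) (hG.pos _ hq.1 _)).ne'))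

theorem errT_cont (hp : 2 ≤ p) (ha : ContinuousOn a (Icc 0 1)) (hb : ContinuousOn b (Icc 0 1))
    (hF : SolP a b da F Ft Fx Fxx)
    (hG : SolP a b da G Gt Gx Gxx) (hT : TruncFn T T1 T2 L) :
    ContinuousOn (errT p a b T T1 T2 F G) (Ioi 0 ×ˢ Ioo 0 1) := by
  have w0 := wT_cont hF hG hT.c0
  have w1 := wT_cont hF hG hT.c1
  have w2 := wT_cont hF hG hT.c2
  have wp := wTp_cont hp hF hG hT.c0
  have ac := snd_cont ha
  have bc := snd_cont hb
  exact ((((continuousOn_const.mul (wp.mul w0)).mul w1).mul bc).add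
    (((continuousOn_const.mul ac).mul (continuousOn_const.mul (wp.mul w0))).mul w2)).add
    (((continuousOn_const.mul ac).mul (continuousOn_const.mul wp)).mul (w1.pow 2))

theorem derT_cont (hp : 2 ≤ p) (hF : SolP a b da F Ft Fx Fxx)
    (hG : SolP a b da G Gt Gx Gxx) (hT : TruncFn T T1 T2 L) :
    ContinuousOn (derT p T T1 F Ft Fx G Gt Gx) (Ioi 0 ×ˢ Ioo 0 1) := by
  have w0 := wT_cont hF hG hT.c0
  have wp := wTp_cont hp hF hG hT.c0
  exact ((continuousOn_const.mul wp).mul w0).mul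
    (((hT.c1.comp_continuousOn hF.cX).mul
      ((hF.comp_cX hF.cFt).div (hF.comp_cX hF.cFx) (fun q hq => (hF.pos _ hq.1 _).ne')).neg).sub
     ((hT.c1.comp_continuousOn hG.cX).mul
      ((hG.comp_cX hG.cFt).div (hG.comp_cX hG.cFx) (fun q hq => (hG.pos _ hq.1 _).ne')).neg))

theorem derT_hasDeriv (hp : 2 ≤ p) (hF : SolP a b da F Ft Fx Fxx)
    (hG : SolP a b da G Gt Gx Gxx) (hT : TruncFn T T1 T2 L) {t u : ℝ} (ht : 0 < t)
    (hu : u ∈ Ioo (0:ℝ) 1) :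
    HasDerivAt (fun s => |wT T F G (s, u)| ^ p) (derT p T T1 F Ft Fx G Gt Gx (t, u)) t := by
  have h1 : HasDerivAt (fun s => wT T F G (s, u)) _ t :=
    ((hT.d1 _).comp t (hF.dX_t ht hu)).sub ((hT.d1 _).comp t (hG.dX_t ht hu))
  exact (hasDerivAt_abs_rpow (wT T F G (t, u)) (by linarith : 1 < p)).comp t h1

/-- the flux -/
def fluxT (p : ℝ) (a T T1 : ℝ → ℝ) (F Fx G Gx : ℝ → ℝ → ℝ) (t u : ℝ) : ℝ :=
  -(1/2) * (p * (|wT T F G (t, u)| ^ (p - 2) * wT T F G (t, u))) *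
    (T1 (pinv (F t) u) * (a u * Fx t (pinv (F t) u)) -
     T1 (pinv (G t) u) * (a u * Gx t (pinv (G t) u)))

theorem flux_hasDeriv (hp : 2 ≤ p) (hda : ∀ u ∈ Ioo (0:ℝ) 1, HasDerivAt a (da u) u)
    (hF : SolP a b da F Ft Fx Fxx)
    (hG : SolP a b da G Gt Gx Gxx) (hT : TruncFn T T1 T2 L) {t u : ℝ} (ht : 0 < t)
    (hu : u ∈ Ioo (0:ℝ) 1) :
    HasDerivAt (fluxT p a T T1 F Fx G Gx t)
      (derT p T T1 F Ft Fx G Gt Gx (t, u) - (errT p a b T T1 T2 F G (t, u) -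
        p * (p - 1) / 2 * disT p a T T1 F Fx G Gx (t, u))) u := by
  have dX := hF.dX_u ht hu
  have dY := hG.dX_u ht hu
  have h1 : HasDerivAt (fun v => wT T F G (t, v)) _ u :=
    ((hT.d1 _).comp u dX).sub ((hT.d1 _).comp u dY)
  have h2 := ((hasDerivAt_abs_rpow_mul hp (wT T F G (t, u))).comp u h1).const_mul p |>.const_mul (-(1/2))
  have hf := (hF.dxx t ht (pinv (F t) u)).comp u dX
  have hg := (hG.dxx t ht (pinv (G t) u)).comp u dY
  have h3 := (((hT.d2 _).comp u dX).mul ((hda u hu).mul hf)).sub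
    (((hT.d2 _).comp u dY).mul ((hda u hu).mul hg))
  have h4 := h2.mul h3
  refine HasDerivAt.congr_deriv (f' := _) h4 ?_
  have pF := hF.pde t ht (pinv (F t) u)
  have pG := hG.pde t ht (pinv (G t) u)
  rw [hF.F_pinv ht hu] at pF
  rw [hG.F_pinv ht hu] at pG
  have f0 := (hF.pos t ht (pinv (F t) u)).ne'
  have g0 := (hG.pos t ht (pinv (G t) u)).ne'
  simp only [derT, errT, disT, Function.comp, Pi.mul_apply, Pi.sub_apply]
  rw [pF, pG]
  have hw1 : wT T1 F G (t, u) = T1 (pinv (F t) u) - T1 (pinv (G t) u) := rfl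
  have hw2 : wT T2 F G (t, u) = T2 (pinv (F t) u) - T2 (pinv (G t) u) := rfl
  rw [hw1, hw2]
  generalize |wT T F G (t, u)| ^ (p - 2) = W
  generalize wT T F G (t, u) = w
  generalize Fx t (pinv (F t) u) = f at *
  generalize Gx t (pinv (G t) u) = g at *
  generalize Fxx t (pinv (F t) u) = f2 at *
  generalize Gxx t (pinv (G t) u) = g2 at *
  generalize T1 (pinv (F t) u) = x1
  generalize T1 (pinv (G t) u) = y1
  generalize T2 (pinv (F t) u) = x2
  generalize T2 (pinv (G t) u) = y2
  field_simp
  ring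

end
end

section
section
variable {a b da : ℝ → ℝ} {F Ft Fx Fxx G Gt Gx Gxx : ℝ → ℝ → ℝ} {T T1 T2 : ℝ → ℝ} {L p : ℝ}

theorem SolP.unif (hF : SolP a b da F Ft Fx Fxx) {t₁ t₂ : ℝ} (h1 : 0 < t₁) (h12 : t₁ ≤ t₂) (L : ℝ) :
    ∃ α β, 0 < α ∧ β < 1 ∧ ∀ t ∈ Icc t₁ t₂, α ≤ F t (-L) ∧ F t L ≤ β := by
  have c : ∀ x, ContinuousOn (fun t => F t x) (Icc t₁ t₂) := fun x t ht =>
    (hF.cont_t (h1.trans_le ht.1) x).continuousWithinAt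
  obtain ⟨s, hs, hsm⟩ := isCompact_Icc.exists_isMinOn (nonempty_Icc.2 h12) (c (-L))
  obtain ⟨r, hr, hrm⟩ := isCompact_Icc.exists_isMaxOn (nonempty_Icc.2 h12) (c L)
  exact ⟨F s (-L), F r L, (hF.memIoo (h1.trans_le hs.1) _).1, (hF.memIoo (h1.trans_le hr.1) _).2,
    fun t ht => ⟨hsm ht, hrm ht⟩⟩

theorem unif2 (hF : SolP a b da F Ft Fx Fxx) (hG : SolP a b da G Gt Gx Gxx)
    {t₁ t₂ : ℝ} (h1 : 0 < t₁) (h12 : t₁ ≤ t₂) (hL : 0 < L) :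
    ∃ α β, 0 < α ∧ α < β ∧ β < 1 ∧ ∀ t ∈ Icc t₁ t₂, ∀ u ∈ Ioo (0:ℝ) 1, (u ≤ α ∨ β ≤ u) →
      (pinv (F t) u ≤ -L ∧ pinv (G t) u ≤ -L) ∨ (L ≤ pinv (F t) u ∧ L ≤ pinv (G t) u) := by
  obtain ⟨α, β, hα, hβ, H⟩ := hF.unif h1 h12 L
  obtain ⟨α', β', hα', hβ', H'⟩ := hG.unif h1 h12 L
  refine ⟨min α α', max β β', lt_min hα hα', ?_, max_lt hβ hβ', ?_⟩
  · have h2 := H t₁ ⟨le_rfl, h12⟩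
    have h3 := hF.strictMono h1 (show -L < L by linarith)
    calc min α α' ≤ α := min_le_left _ _
      _ ≤ _ := h2.1
      _ < _ := h3
      _ ≤ _ := h2.2
      _ ≤ _ := le_max_left _ _
  · intro t ht u hu hor
    have ht0 := h1.trans_le ht.1
    have e1 := hF.F_pinv ht0 hu
    have e2 := hG.F_pinv ht0 hu
    rcases hor with h | h
    · left
      refine ⟨(hF.strictMono ht0).le_iff_le.1 ?_, (hG.strictMono ht0).le_iff_le.1 ?_⟩
      · rw [e1]; exact (h.trans (min_le_left _ _)).trans (H t ht).1
      · rw [e2]; exact (h.trans (min_le_right _ _)).trans (H' t ht).1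
    · right
      refine ⟨(hF.strictMono ht0).le_iff_le.1 ?_, (hG.strictMono ht0).le_iff_le.1 ?_⟩
      · rw [e1]; exact (H t ht).2.trans ((le_max_left _ _).trans h)
      · rw [e2]; exact (H' t ht).2.trans ((le_max_right _ _).trans h)

theorem all_zero (hT : TruncFn T T1 T2 L) {t u : ℝ}
    (h : (pinv (F t) u ≤ -L ∧ pinv (G t) u ≤ -L) ∨ (L ≤ pinv (F t) u ∧ L ≤ pinv (G t) u)) :
    wT T F G (t, u) = 0 ∧ T1 (pinv (F t) u) = 0 ∧ T1 (pinv (G t) u) = 0 ∧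
    T2 (pinv (F t) u) = 0 ∧ T2 (pinv (G t) u) = 0 := by
  have hX : L ≤ |pinv (F t) u| := by
    rcases h with h | h
    · exact le_abs.2 (Or.inr (by linarith [h.1]))
    · exact le_abs.2 (Or.inl h.1)
  have hY : L ≤ |pinv (G t) u| := by
    rcases h with h | h
    · exact le_abs.2 (Or.inr (by linarith [h.2]))
    · exact le_abs.2 (Or.inl h.2)
  refine ⟨?_, hT.z1 _ hX, hT.z1 _ hY, hT.z2 _ hX, hT.z2 _ hY⟩
  simp only [wT]
  rcases h with h | h
  · rw [hT.bot _ h.1, hT.bot _ h.2, sub_self]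
  · rw [hT.top _ h.1, hT.top _ h.2, sub_self]

theorem prod_integrable {k : ℝ × ℝ → ℝ} (hk : ContinuousOn k (Ioi 0 ×ˢ Ioo 0 1))
    {t₁ t₂ α β : ℝ} (h1 : 0 < t₁) (hα : 0 < α) (hβ : β < 1)
    (hz : ∀ t ∈ Icc t₁ t₂, ∀ u ∈ Ioo (0:ℝ) 1, (u ≤ α ∨ β ≤ u) → k (t, u) = 0) :
    IntegrableOn k (Ioc t₁ t₂ ×ˢ Ioo 0 1) := by
  have hi : IntegrableOn k (Icc t₁ t₂ ×ˢ Icc α β) :=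
    (hk.mono (prod_mono (fun t ht => h1.trans_le ht.1)
      (fun u hu => ⟨hα.trans_le hu.1, hu.2.trans_lt hβ⟩))).integrableOn_compact
      (isCompact_Icc.prod isCompact_Icc)
  refine hi.of_forall_sdiff_eq_zero (measurableSet_Ioc.prod measurableSet_Ioo) ?_
  rintro ⟨t, u⟩ ⟨⟨ht, hu⟩, hn⟩
  have ht' : t ∈ Icc t₁ t₂ := Ioc_subset_Icc_self ht
  refine hz t ht' u hu ?_
  by_contra hcon
  push Not at hcon
  exact hn ⟨ht', hcon.1.le, hcon.2.le⟩

theorem slice_eq {k : ℝ → ℝ} {α β : ℝ} (hα : 0 < α) (hαβ : α < β) (hβ : β < 1)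
    (hz : ∀ u ∈ Ioo (0:ℝ) 1, (u ≤ α ∨ β ≤ u) → k u = 0) :
    ∫ u in Ioo (0:ℝ) 1, k u = ∫ u in α..β, k u := by
  rw [intervalIntegral.integral_of_le hαβ.le]
  refine setIntegral_eq_of_subset_of_forall_sdiff_eq_zero measurableSet_Ioo
    (fun u hu => ⟨hα.trans hu.1, hu.2.trans_lt hβ⟩) ?_
  rintro u ⟨hu, hn⟩
  refine hz u hu ?_
  by_contra hcon
  push Not at hcon
  exact hn ⟨hcon.1, hcon.2.le⟩

theorem slice_integrable {k : ℝ → ℝ} (hk : ContinuousOn k (Ioo 0 1)) {α β : ℝ} (hα : 0 < α) (hβ : β < 1)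
    (hz : ∀ u ∈ Ioo (0:ℝ) 1, (u ≤ α ∨ β ≤ u) → k u = 0) :
    IntegrableOn k (Ioo 0 1) := by
  have hi : IntegrableOn k (Icc α β) :=
    (hk.mono (fun u hu => ⟨hα.trans_le hu.1, hu.2.trans_lt hβ⟩)).integrableOn_compact isCompact_Icc
  refine hi.of_forall_sdiff_eq_zero measurableSet_Ioo ?_
  rintro u ⟨hu, hn⟩
  refine hz u hu ?_
  by_contra hcon
  push Not at hcon
  exact hn ⟨hcon.1.le, hcon.2.le⟩

theorem trunc_identity (hp : 2 ≤ p) (ha : ContinuousOn a (Icc 0 1)) (hb : ContinuousOn b (Icc 0 1))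
    (hda : ∀ u ∈ Ioo (0:ℝ) 1, HasDerivAt a (da u) u)
    (hF : SolP a b da F Ft Fx Fxx) (hG : SolP a b da G Gt Gx Gxx) (hT : TruncFn T T1 T2 L)
    {t₁ t₂ : ℝ} (h1 : 0 < t₁) (h12 : t₁ ≤ t₂) :
    IntegrableOn (errT p a b T T1 T2 F G) (Ioc t₁ t₂ ×ˢ Ioo 0 1) ∧
    IntegrableOn (disT p a T T1 F Fx G Gx) (Ioc t₁ t₂ ×ˢ Ioo 0 1) ∧
    (∫ u in Ioo (0:ℝ) 1, |wT T F G (t₂, u)| ^ p) - (∫ u in Ioo (0:ℝ) 1, |wT T F G (t₁, u)| ^ p) =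
      (∫ q in Ioc t₁ t₂ ×ˢ Ioo (0:ℝ) 1, errT p a b T T1 T2 F G q) -
      p * (p - 1) / 2 * ∫ q in Ioc t₁ t₂ ×ˢ Ioo (0:ℝ) 1, disT p a T T1 F Fx G Gx q := by
  obtain ⟨α, β, hα, hαβ, hβ, H⟩ := unif2 hF hG h1 h12 hT.Lpos
  have Z := fun t ht u hu hor => all_zero (F := F) (G := G) hT (H t ht u hu hor)
  have zd : ∀ t ∈ Icc t₁ t₂, ∀ u ∈ Ioo (0:ℝ) 1, (u ≤ α ∨ β ≤ u) →
      derT p T T1 F Ft Fx G Gt Gx (t, u) = 0 := by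
    intro t ht u hu hor
    obtain ⟨z0, z1, z2, z3, z4⟩ := Z t ht u hu hor
    simp [derT, z0]
  have ze : ∀ t ∈ Icc t₁ t₂, ∀ u ∈ Ioo (0:ℝ) 1, (u ≤ α ∨ β ≤ u) →
      errT p a b T T1 T2 F G (t, u) = 0 := by
    intro t ht u hu hor
    obtain ⟨z0, z1, z2, z3, z4⟩ := Z t ht u hu hor
    have : wT T1 F G (t, u) = 0 := by simp [wT, z1, z2]
    simp [errT, z0, this]
  have zs : ∀ t ∈ Icc t₁ t₂, ∀ u ∈ Ioo (0:ℝ) 1, (u ≤ α ∨ β ≤ u) →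
      disT p a T T1 F Fx G Gx (t, u) = 0 := by
    intro t ht u hu hor
    obtain ⟨z0, z1, z2, z3, z4⟩ := Z t ht u hu hor
    simp [disT, z1]
  have zw : ∀ t ∈ Icc t₁ t₂, ∀ u ∈ Ioo (0:ℝ) 1, (u ≤ α ∨ β ≤ u) → |wT T F G (t, u)| ^ p = 0 := by
    intro t ht u hu hor
    rw [(Z t ht u hu hor).1, abs_zero, Real.zero_rpow (by linarith)]
  have cd := derT_cont hp hF hG hT
  have ce := errT_cont hp ha hb hF hG hT
  have cs := disT_cont hp ha hF hG hT.c0 hT.c1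
  have Id := prod_integrable cd h1 hα hβ zd
  have Ie := prod_integrable ce h1 hα hβ ze
  have Is := prod_integrable cs h1 hα hβ zs
  have wi : ∀ t ∈ Icc t₁ t₂, IntegrableOn (fun u => |wT T F G (t, u)| ^ p) (Ioo 0 1) := by
    intro t ht
    refine slice_integrable ?_ hα hβ (zw t ht)
    refine ContinuousOn.rpow_const ?_ (fun _ _ => Or.inr (by linarith))
    exact ((wT_cont hF hG hT.c0).comp (f := fun u : ℝ => (t, u)) (by fun_prop)
      (fun u hu => ⟨h1.trans_le ht.1, hu⟩)).abs
  refine ⟨Ie, Is, ?_⟩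
  -- first evaluation
  have E1 : ∫ q in Ioc t₁ t₂ ×ˢ Ioo (0:ℝ) 1, derT p T T1 F Ft Fx G Gt Gx q =
      (∫ u in Ioo (0:ℝ) 1, |wT T F G (t₂, u)| ^ p) -
        (∫ u in Ioo (0:ℝ) 1, |wT T F G (t₁, u)| ^ p) := by
    rw [← integral_sub (wi t₂ ⟨h12, le_rfl⟩) (wi t₁ ⟨le_rfl, h12⟩)]
    have Id' := Id
    rw [IntegrableOn, Measure.volume_eq_prod, ← Measure.prod_restrict] at Id'
    rw [Measure.volume_eq_prod, ← Measure.prod_restrict, integral_prod_symm _ Id']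
    refine setIntegral_congr_fun measurableSet_Ioo fun u hu => ?_
    show ∫ t in Ioc t₁ t₂, derT p T T1 F Ft Fx G Gt Gx (t, u) = _
    rw [← intervalIntegral.integral_of_le h12]
    refine intervalIntegral.integral_eq_sub_of_hasDerivAt (f := fun s => |wT T F G (s, u)| ^ p)
      (fun t ht => ?_) ?_
    · rw [uIcc_of_le h12] at ht
      exact derT_hasDeriv hp hF hG hT (h1.trans_le ht.1) hu
    · refine ContinuousOn.intervalIntegrable ?_
      rw [uIcc_of_le h12]
      exact cd.comp (f := fun t : ℝ => (t, u)) (by fun_prop) (fun t ht => ⟨h1.trans_le ht.1, hu⟩)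
  have E2 : ∫ q in Ioc t₁ t₂ ×ˢ Ioo (0:ℝ) 1, derT p T T1 F Ft Fx G Gt Gx q =
      ∫ q in Ioc t₁ t₂ ×ˢ Ioo (0:ℝ) 1, (errT p a b T T1 T2 F G q -
        p * (p - 1) / 2 * disT p a T T1 F Fx G Gx q) := by
    have Ik : IntegrableOn (fun q => errT p a b T T1 T2 F G q -
        p * (p - 1) / 2 * disT p a T T1 F Fx G Gx q) (Ioc t₁ t₂ ×ˢ Ioo 0 1) :=
      Ie.sub (Is.const_mul _)
    have Id' := Id
    rw [Measure.volume_eq_prod] at Id' Ik ⊢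
    rw [setIntegral_prod _ Id', setIntegral_prod _ Ik]
    refine setIntegral_congr_fun measurableSet_Ioc fun t ht => ?_
    have ht' : t ∈ Icc t₁ t₂ := Ioc_subset_Icc_self ht
    have ht0 : 0 < t := h1.trans ht.1
    show ∫ u in Ioo (0:ℝ) 1, derT p T T1 F Ft Fx G Gt Gx (t, u) =
      ∫ u in Ioo (0:ℝ) 1, (errT p a b T T1 T2 F G (t, u) -
        p * (p - 1) / 2 * disT p a T T1 F Fx G Gx (t, u))
    have hsub : Icc α β ⊆ Ioo (0:ℝ) 1 := fun u hu => ⟨hα.trans_le hu.1, hu.2.trans_lt hβ⟩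
    have sl : ∀ {k : ℝ × ℝ → ℝ}, ContinuousOn k (Ioi 0 ×ˢ Ioo 0 1) →
        IntervalIntegrable (fun u => k (t, u)) volume α β := by
      intro k hk
      refine ContinuousOn.intervalIntegrable ?_
      rw [uIcc_of_le hαβ.le]
      exact hk.comp (f := fun u : ℝ => (t, u)) (by fun_prop) (fun u hu => ⟨ht0, hsub hu⟩)
    rw [slice_eq hα hαβ hβ (zd t ht'), slice_eq hα hαβ hβ (fun u hu hor => by
      rw [ze t ht' u hu hor, zs t ht' u hu hor, mul_zero, sub_zero])]
    have iK := (sl ce).sub ((sl cs).const_mul (p * (p - 1) / 2))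
    rw [← sub_eq_zero, ← intervalIntegral.integral_sub (sl cd) iK]
    have := intervalIntegral.integral_eq_sub_of_hasDerivAt (a := α) (b := β)
      (f := fluxT p a T T1 F Fx G Gx t) (fun u hu => flux_hasDeriv hp hda hF hG hT ht0
        (hsub (by rwa [uIcc_of_le hαβ.le] at hu))) ((sl cd).sub iK)
    refine this.trans ?_
    have e1 := (Z t ht' α (hsub ⟨le_rfl, hαβ.le⟩) (Or.inl le_rfl)).1
    have e2 := (Z t ht' β (hsub ⟨hαβ.le, le_rfl⟩) (Or.inr le_rfl)).1
    simp [fluxT, e1, e2]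
  rw [← E1, E2, integral_sub Ie (Is.const_mul _), integral_const_mul]

end
end

section

def chiT (x : ℝ) : ℝ := Real.smoothTransition (2 - x ^ 2)
def TR (R x : ℝ) : ℝ := ∫ y in (0:ℝ)..x, chiT (y / R)
def TR1 (R x : ℝ) : ℝ := chiT (x / R)
def TR2 (R x : ℝ) : ℝ := deriv chiT (x / R) / R

theorem chiT_smooth : ContDiff ℝ (⊤ : ℕ∞) chiT :=
  Real.smoothTransition.contDiff.comp (contDiff_const.sub (contDiff_id.pow 2))

theorem chiT_nonneg (x : ℝ) : 0 ≤ chiT x := Real.smoothTransition.nonneg _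
theorem chiT_le_one (x : ℝ) : chiT x ≤ 1 := Real.smoothTransition.le_one _

theorem chiT_one {x : ℝ} (hx : |x| ≤ 1) : chiT x = 1 := by
  apply Real.smoothTransition.one_of_one_le
  have : x ^ 2 ≤ 1 := by rw [← sq_abs]; nlinarith [abs_nonneg x]
  linarith

theorem chiT_zero {x : ℝ} (hx : 3/2 ≤ |x|) : chiT x = 0 := by
  apply Real.smoothTransition.zero_of_nonpos
  have : 2 ≤ x ^ 2 := by rw [← sq_abs]; nlinarith [abs_nonneg x]
  linarith

theorem chiT_anti {x y : ℝ} (h : |x| ≤ |y|) : chiT y ≤ chiT x := by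
  apply Real.smoothTransition.monotone
  have := sq_le_sq.2 h
  linarith

theorem chiT_deriv_cont : Continuous (deriv chiT) :=
  ((contDiff_infty_iff_deriv (f := chiT)).1 chiT_smooth).2.continuous

theorem chiT_deriv_bound : ∃ K, 0 ≤ K ∧ ∀ x, |deriv chiT x| ≤ K := by
  have hc : HasCompactSupport chiT := by
    refine HasCompactSupport.intro (K := Icc (-2) 2) isCompact_Icc fun x hx => ?_
    apply chiT_zero
    by_contra hcon
    push Not at hcon
    have := abs_lt.1 hcon
    exact hx ⟨by linarith [this.1], by linarith [this.2]⟩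
  obtain ⟨K, hK⟩ := hc.deriv.exists_bound_of_continuous chiT_deriv_cont
  exact ⟨K, (norm_nonneg _).trans (hK 0), hK⟩

theorem chiT_deriv_zero {x : ℝ} (hx : 2 ≤ |x| ∨ |x| < 1) : deriv chiT x = 0 := by
  rcases hx with hx | hx
  · have : chiT =ᶠ[𝓝 x] fun _ => 0 := by
      have h2 : ∀ᶠ y in 𝓝 x, 3/2 < |y| := continuous_abs.continuousAt.eventually (lt_mem_nhds (by linarith))
      filter_upwards [h2] with y hy using chiT_zero hy.le
    rw [this.deriv_eq, deriv_const]
  · have : chiT =ᶠ[𝓝 x] fun _ => 1 := by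
      have h2 : ∀ᶠ y in 𝓝 x, |y| < 1 := continuous_abs.continuousAt.eventually (gt_mem_nhds hx)
      filter_upwards [h2] with y hy using chiT_one hy.le
    rw [this.deriv_eq, deriv_const]

theorem TR1_cont (R : ℝ) : Continuous (fun x => chiT (x / R)) :=
  chiT_smooth.continuous.comp (continuous_id.div_const R)

theorem TR_sub (R x y : ℝ) : TR R y - TR R x = ∫ z in x..y, chiT (z / R) :=
  intervalIntegral.integral_interval_sub_left ((TR1_cont R).intervalIntegrable _ _)
    ((TR1_cont R).intervalIntegrable _ _)

theorem TR_mono_diff {R R' x y : ℝ} (hR : 0 < R) (hRR : R ≤ R') (hxy : x ≤ y) :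
    0 ≤ TR R y - TR R x ∧ TR R y - TR R x ≤ TR R' y - TR R' x ∧ TR R y - TR R x ≤ y - x := by
  rw [TR_sub, TR_sub]
  refine ⟨intervalIntegral.integral_nonneg hxy fun z _ => chiT_nonneg _,
    intervalIntegral.integral_mono_on hxy ((TR1_cont R).intervalIntegrable _ _)
      ((TR1_cont R').intervalIntegrable _ _) fun z _ => ?_, ?_⟩
  · apply chiT_anti
    rw [abs_div, abs_div, abs_of_pos hR, abs_of_pos (hR.trans_le hRR)]
    gcongr
  · have := intervalIntegral.integral_mono_on (μ := volume) hxy ((TR1_cont R).intervalIntegrable _ _)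
      (g := fun _ => (1:ℝ)) (continuous_const.intervalIntegrable _ _) (fun z _ => chiT_le_one (z / R))
    simpa using this

theorem TR_abs_mono {R R' : ℝ} (hR : 0 < R) (hRR : R ≤ R') (x y : ℝ) :
    |TR R x - TR R y| ≤ |TR R' x - TR R' y| ∧ |TR R x - TR R y| ≤ |x - y| := by
  rcases le_total x y with h | h
  · have h1 := TR_mono_diff hR hRR h
    rw [abs_sub_comm, abs_sub_comm (TR R' x), abs_sub_comm x, abs_of_nonneg h1.1,
      abs_of_nonneg (h1.1.trans h1.2.1), abs_of_nonneg (by linarith)]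
    exact h1.2
  · have h1 := TR_mono_diff hR hRR h
    rw [abs_of_nonneg h1.1,
      abs_of_nonneg (h1.1.trans h1.2.1), abs_of_nonneg (by linarith)]
    exact h1.2

theorem TR_zero (R : ℝ) : TR R 0 = 0 := by simp [TR]

theorem TR_id {R x : ℝ} (hR : 0 < R) (hx : |x| ≤ R) : TR R x = x := by
  have : TR R x = ∫ y in (0:ℝ)..x, (1:ℝ) := by
    refine intervalIntegral.integral_congr fun z hz => ?_
    apply chiT_one
    rw [abs_div, abs_of_pos hR, div_le_one hR]
    refine le_trans ?_ hx
    have := abs_sub_left_of_mem_uIcc hz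
    simpa using this
  rw [this]; simp

theorem TR1_one {R x : ℝ} (hR : 0 < R) (hx : |x| ≤ R) : TR1 R x = 1 := by
  apply chiT_one
  rw [abs_div, abs_of_pos hR, div_le_one hR]; exact hx

theorem TR1_mem (R x : ℝ) : 0 ≤ TR1 R x ∧ TR1 R x ≤ 1 := ⟨chiT_nonneg _, chiT_le_one _⟩

theorem TR1_mono {R R' : ℝ} (hR : 0 < R) (hRR : R ≤ R') (x : ℝ) : TR1 R x ≤ TR1 R' x := by
  apply chiT_anti
  rw [abs_div, abs_div, abs_of_pos hR, abs_of_pos (hR.trans_le hRR)]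
  gcongr

theorem TR2_zero {R x : ℝ} (hR : 0 < R) (hx : |x| < R) : TR2 R x = 0 := by
  rw [TR2, chiT_deriv_zero, zero_div]
  right
  rw [abs_div, abs_of_pos hR, div_lt_one hR]; exact hx

theorem TR_trunc {R : ℝ} (hR : 0 < R) : TruncFn (TR R) (TR1 R) (TR2 R) (2 * R) := by
  have hdiv : ∀ x, 2 * R ≤ |x| → 2 ≤ |x / R| := fun x hx => by
    rwa [abs_div, abs_of_pos hR, le_div_iff₀ hR]
  have z1 : ∀ x, 2 * R ≤ |x| → TR1 R x = 0 := fun x hx => chiT_zero (by linarith [hdiv x hx])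
  refine ⟨by positivity, ?_, ?_, ?_, ?_, ?_, z1, ?_⟩
  · intro x
    exact intervalIntegral.integral_hasDerivAt_right ((TR1_cont R).intervalIntegrable _ _)
      (TR1_cont R).stronglyMeasurable.stronglyMeasurableAtFilter (TR1_cont R).continuousAt
  · intro x
    have h1 : HasDerivAt chiT (deriv chiT (x / R)) (x / R) :=
      (chiT_smooth.differentiable (by simp) _).hasDerivAt
    have h2 := h1.comp x ((hasDerivAt_id x).div_const R)
    refine HasDerivAt.congr_deriv (f' := _) h2 ?_
    rw [TR2]; ring
  · exact (chiT_deriv_cont.comp (continuous_id.div_const R)).div_const R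
  · intro x hx
    rw [← sub_eq_zero, TR_sub]
    have : ∫ z in (2 * R)..x, chiT (z / R) = ∫ z in (2 * R)..x, (0:ℝ) := by
      refine intervalIntegral.integral_congr fun z hz => ?_
      rw [uIcc_of_le hx] at hz
      exact z1 z (hz.1.trans (le_abs_self z))
    rw [this]; simp
  · intro x hx
    rw [← sub_eq_zero, TR_sub]
    have : ∫ z in (-(2 * R))..x, chiT (z / R) = ∫ z in (-(2 * R))..x, (0:ℝ) := by
      refine intervalIntegral.integral_congr fun z hz => ?_
      rw [uIcc_of_ge hx] at hz
      exact z1 z (le_abs.2 (Or.inr (by linarith [hz.2])))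
    rw [this]; simp
  · intro x hx
    rw [TR2, chiT_deriv_zero (Or.inl (hdiv x hx)), zero_div]

theorem TR_bound {R : ℝ} (hR : 0 < R) (x : ℝ) : |TR R x| ≤ 2 * R := by
  have h0 : ∀ x, |TR R x| ≤ |x| := fun x => by
    have := (TR_abs_mono hR le_rfl x 0).2
    rwa [TR_zero, sub_zero, sub_zero] at this
  have hT := TR_trunc hR
  rcases le_total x (-(2*R)) with h | h
  · rw [hT.bot x h]; refine (h0 _).trans ?_; rw [abs_neg, abs_of_pos (by positivity)]
  · rcases le_total (2*R) x with h' | h'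
    · rw [hT.top x h']; refine (h0 _).trans ?_; rw [abs_of_pos (by positivity)]
    · exact (h0 x).trans (abs_le.2 ⟨h, h'⟩)
end

section
section
variable {a b da : ℝ → ℝ} {F Ft Fx Fxx G Gt Gx Gxx : ℝ → ℝ → ℝ} {p : ℝ}

theorem err_zero {R t u : ℝ} (hR : 0 < R) (hX : |pinv (F t) u| < R) (hY : |pinv (G t) u| < R) :
    errT p a b (TR R) (TR1 R) (TR2 R) F G (t, u) = 0 := by
  have h1 : wT (TR1 R) F G (t, u) = 0 := by
    simp only [wT]; rw [TR1_one hR hX.le, TR1_one hR hY.le, sub_self]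
  have h2 : wT (TR2 R) F G (t, u) = 0 := by
    simp only [wT]; rw [TR2_zero hR hX, TR2_zero hR hY, sub_self]
  simp [errT, h1, h2]

theorem err_pointwise (hp : 2 ≤ p) {C : ℝ} (haC : ∀ u ∈ Icc (0:ℝ) 1, |a u| ≤ C)
    (hbC : ∀ u ∈ Icc (0:ℝ) 1, |b u| ≤ C) : ∃ C', 0 ≤ C' ∧ ∀ F G : ℝ → ℝ → ℝ, ∀ R, 1 ≤ R →
      ∀ t, ∀ u ∈ Ioo (0:ℝ) 1,
      |errT p a b (TR R) (TR1 R) (TR2 R) F G (t, u)| ≤ C' * R ^ (p - 1) := by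
  have hC0 : 0 ≤ C := (abs_nonneg _).trans (haC 0 ⟨le_rfl, zero_le_one⟩)
  obtain ⟨K, hK, hKb⟩ := chiT_deriv_bound
  have hp1 : 0 ≤ p - 1 := by linarith
  have hp0 : 0 ≤ p := by linarith
  refine ⟨(p * 4 * C + 1/2 * C * (p * 4) * (2 * K) + 1/2 * C * (p * (p - 1))) * 4 ^ (p - 2),
    by positivity, ?_⟩
  intro F G R hR t u hu
  have hR0 : 0 < R := by linarith
  have ha := haC u (Ioo_subset_Icc_self hu)
  have hb := hbC u (Ioo_subset_Icc_self hu)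
  have hw : |wT (TR R) F G (t, u)| ≤ 4 * R := by
    simp only [wT]
    refine (abs_sub _ _).trans ?_
    linarith [TR_bound hR0 (pinv (F t) u), TR_bound hR0 (pinv (G t) u)]
  have hw1 : |wT (TR1 R) F G (t, u)| ≤ 1 := by
    simp only [wT]
    have h1 := TR1_mem R (pinv (F t) u)
    have h2 := TR1_mem R (pinv (G t) u)
    exact abs_le.2 ⟨by linarith [h1.1, h2.2], by linarith [h1.2, h2.1]⟩
  have hw2 : |wT (TR2 R) F G (t, u)| ≤ 2 * K := by
    simp only [wT]
    refine (abs_sub _ _).trans ?_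
    have : ∀ x, |TR2 R x| ≤ K := fun x => by
      rw [TR2, abs_div, abs_of_pos hR0]
      exact (div_le_self (abs_nonneg _) hR).trans (hKb _)
    linarith [this (pinv (F t) u), this (pinv (G t) u)]
  have hQ : |wT (TR R) F G (t, u)| ^ (p - 2) ≤ (4 * R) ^ (p - 2) :=
    Real.rpow_le_rpow (abs_nonneg _) hw (by linarith)
  have hQ0 : 0 ≤ |wT (TR R) F G (t, u)| ^ (p - 2) := Real.rpow_nonneg (abs_nonneg _) _
  have hQ1 : 0 ≤ (4 * R) ^ (p - 2) := by positivity
  have hR1 : R ^ (p - 1) = R ^ (p - 2) * R := by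
    rw [← Real.rpow_add_one hR0.ne']; congr 1; ring
  simp only [errT]
  refine (abs_add_three _ _ _).trans ?_
  simp only [abs_mul, abs_of_nonneg hQ0, abs_of_nonneg hp0, abs_of_nonneg hp1, abs_pow]
  rw [abs_of_pos (by norm_num : (0:ℝ) < 1/2)]
  set Q := (4 * R) ^ (p - 2) with hQd
  calc _ ≤ p * (Q * (4 * R)) * 1 * C + 1/2 * C * (p * (Q * (4 * R))) * (2 * K)
        + 1/2 * C * (p * (p - 1) * Q) * 1 ^ 2 := by gcongr
    _ = (p * 4 * C + 1/2 * C * (p * 4) * (2 * K)) * (Q * R) + 1/2 * C * (p * (p - 1)) * Q := by ring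
    _ ≤ (p * 4 * C + 1/2 * C * (p * 4) * (2 * K)) * (Q * R) + 1/2 * C * (p * (p - 1)) * (Q * R) := by
        gcongr
        exact le_mul_of_one_le_right hQ1 hR
    _ = (p * 4 * C + 1/2 * C * (p * 4) * (2 * K) + 1/2 * C * (p * (p - 1))) * (Q * R) := by ring
    _ = _ := by
        rw [hR1, hQd, Real.mul_rpow (by norm_num) hR0.le]; ring

theorem err_bound (hp : 2 ≤ p) {C : ℝ} (haC : ∀ u ∈ Icc (0:ℝ) 1, |a u| ≤ C)
    (hbC : ∀ u ∈ Icc (0:ℝ) 1, |b u| ≤ C) : ∃ C', 0 ≤ C' ∧ ∀ {F Ft Fx Fxx G Gt Gx Gxx : ℝ → ℝ → ℝ}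
      (_ : SolP a b da F Ft Fx Fxx) (_ : SolP a b da G Gt Gx Gxx) (R : ℝ), 1 ≤ R →
      ∀ t₁ t₂ δ : ℝ, 0 < t₁ → t₁ ≤ t₂ → 
      IntegrableOn (errT p a b (TR R) (TR1 R) (TR2 R) F G) (Ioc t₁ t₂ ×ˢ Ioo 0 1) →
      (∀ t ∈ Ioc t₁ t₂, R ^ (p - 1) * (F t (-R) + (1 - F t R) + (G t (-R) + (1 - G t R))) ≤ δ) →
      |∫ q in Ioc t₁ t₂ ×ˢ Ioo (0:ℝ) 1, errT p a b (TR R) (TR1 R) (TR2 R) F G q|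
        ≤ C' * δ * (t₂ - t₁) := by
  obtain ⟨C', hC', hb⟩ := err_pointwise (a := a) (b := b) hp haC hbC
  refine ⟨C', hC', ?_⟩
  intro F Ft Fx Fxx G Gt Gx Gxx hF hG R hR t₁ t₂ δ h1 h12 hI hδ
  have hR0 : 0 < R := by linarith
  rw [Measure.volume_eq_prod] at hI ⊢
  rw [setIntegral_prod _ hI]
  have key : ∀ t ∈ Ioc t₁ t₂,
      ‖∫ u in Ioo (0:ℝ) 1, errT p a b (TR R) (TR1 R) (TR2 R) F G (t, u)‖ ≤ C' * δ := by
    intro t ht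
    have ht0 : 0 < t := h1.trans ht.1
    set E : Set ℝ := (Ioc 0 (F t (-R)) ∪ Ico (F t R) 1) ∪ (Ioc 0 (G t (-R)) ∪ Ico (G t R) 1) with hE
    have hEm : MeasurableSet (Ioo (0:ℝ) 1 ∩ E) := by measurability
    have hvol : volume.real (Ioo (0:ℝ) 1 ∩ E) ≤
        F t (-R) + (1 - F t R) + (G t (-R) + (1 - G t R)) := by
      have m1 := hF.memIoo ht0 (-R)
      have m2 := hF.memIoo ht0 R
      have m3 := hG.memIoo ht0 (-R)
      have m4 := hG.memIoo ht0 R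
      have fin : volume E ≠ ⊤ := by
        rw [hE]
        refine (measure_union_lt_top (measure_union_lt_top ?_ ?_) (measure_union_lt_top ?_ ?_)).ne <;> simp
      calc volume.real (Ioo (0:ℝ) 1 ∩ E) ≤ volume.real E := measureReal_mono inter_subset_right fin
        _ ≤ _ := measureReal_union_le _ _
        _ ≤ _ := add_le_add (measureReal_union_le _ _) (measureReal_union_le _ _)
        _ = _ := by
          simp only [measureReal_def, Real.volume_Ioc, Real.volume_Ico]
          rw [ENNReal.toReal_ofReal (by linarith [m1.1]), ENNReal.toReal_ofReal (by linarith [m2.2]),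
            ENNReal.toReal_ofReal (by linarith [m3.1]), ENNReal.toReal_ofReal (by linarith [m4.2])]
          ring
    have hz : ∀ u ∈ Ioo (0:ℝ) 1 \ (Ioo (0:ℝ) 1 ∩ E),
        errT p a b (TR R) (TR1 R) (TR2 R) F G (t, u) = 0 := by
      rintro u ⟨hu, hn⟩
      have hnE : u ∉ E := fun h => hn ⟨hu, h⟩
      simp only [hE, mem_union, not_or, mem_Ioc, mem_Ico, not_and, not_le, not_lt] at hnE
      obtain ⟨⟨n1, n2⟩, n3, n4⟩ := hnE
      refine err_zero hR0 ?_ ?_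
      · rw [abs_lt]
        refine ⟨(hF.lt_pinv_iff ht0 hu).2 (n1 hu.1), (hF.pinv_lt_iff ht0 hu).2 ?_⟩
        by_contra hcon
        exact absurd (n2 (not_lt.1 hcon)) (not_le.2 hu.2)
      · rw [abs_lt]
        refine ⟨(hG.lt_pinv_iff ht0 hu).2 (n3 hu.1), (hG.pinv_lt_iff ht0 hu).2 ?_⟩
        by_contra hcon
        exact absurd (n4 (not_lt.1 hcon)) (not_le.2 hu.2)
    rw [setIntegral_eq_of_subset_of_forall_sdiff_eq_zero measurableSet_Ioo inter_subset_left hz]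
    have hfin : volume (Ioo (0:ℝ) 1 ∩ E) < ⊤ :=
      (measure_mono inter_subset_left).trans_lt (by simp)
    refine (norm_setIntegral_le_of_norm_le_const hfin
      (fun u hu => hb F G R hR t u hu.1)).trans ?_
    calc C' * R ^ (p - 1) * volume.real (Ioo (0:ℝ) 1 ∩ E)
        ≤ C' * R ^ (p - 1) * (F t (-R) + (1 - F t R) + (G t (-R) + (1 - G t R))) := by gcongr
      _ = C' * (R ^ (p - 1) * (F t (-R) + (1 - F t R) + (G t (-R) + (1 - G t R)))) := by ring
      _ ≤ _ := by gcongr; exact hδ t ht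
  have := norm_setIntegral_le_of_norm_le_const (μ := volume) (s := Ioc t₁ t₂) (by simp) key
  refine this.trans (le_of_eq ?_)
  simp [measureReal_def, Real.volume_Ioc, ENNReal.toReal_ofReal (sub_nonneg.2 h12)]

end
end

section
section
variable {a b da : ℝ → ℝ} {F Ft Fx Fxx G Gt Gx Gxx : ℝ → ℝ → ℝ} {p : ℝ}

theorem init_eq (ha : ContinuousOn a (Icc 0 1)) (hb : ContinuousOn b (Icc 0 1))
    {C : ℝ} (haC : ∀ u ∈ Icc (0:ℝ) 1, |a u| ≤ C) (hbC : ∀ u ∈ Icc (0:ℝ) 1, |b u| ≤ C)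
    {μ : Measure ℝ} [IsProbabilityMeasure μ]
    (hF : IsWeakSolution (primitive a) (primitive b) (cdfOf μ) F) (hm : MemF F)
    (h : Sol a b da F Ft Fx Fxx) : F 0 = cdfOf μ := by
  obtain ⟨P, hPc, -, -, hPF⟩ := hm
  obtain ⟨m1, -, -, b1, r1⟩ := cdf_facts (P 0) (F 0) (hPF 0 le_rfl)
  obtain ⟨m2, -, -, b2, r2⟩ := cdf_facts (⟨μ, inferInstance⟩ : ProbabilityMeasure ℝ) (cdfOf μ)
    (fun x => rfl)
  have li : ∀ f : ℝ → ℝ, Monotone f → LocallyIntegrable f := fun f hf => hf.locallyIntegrable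
  have hae : ∀ᵐ x, F 0 x = cdfOf μ x := by
    apply ae_eq_of_integral_contDiff_smul_eq (li _ m1) (li _ m2)
    intro g hg hgc
    have := weak_bump ha hb haC hbC hF h.cF (fun t ht x => h.mem ht x) (hg.of_le (by simp)) hgc
      (e := 0) ⟨le_rfl, zero_le_one⟩ (κ := 0) (t := 0) le_rfl
      (fun s hs => absurd hs.1 (not_lt.2 hs.2))
    simp only [zero_mul] at this
    have := abs_nonpos_iff.1 this
    simpa only [smul_eq_mul] using sub_eq_zero.1 this
  funext x
  have f1 : Tendsto (F 0) (𝓝[>] x) (𝓝 (F 0 x)) := (r1 x).mono_left (nhdsWithin_mono _ Ioi_subset_Ici_self)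
  have f2 : Tendsto (cdfOf μ) (𝓝[>] x) (𝓝 (cdfOf μ x)) :=
    (r2 x).mono_left (nhdsWithin_mono _ Ioi_subset_Ici_self)
  refine tendsto_nhds_unique_of_frequently_eq f1 f2 ?_
  rw [Filter.frequently_iff]
  intro U hU
  obtain ⟨y, hy, hyU⟩ := (mem_nhdsGT_iff_exists_Ioo_subset).1 hU
  by_contra hcon
  push Not at hcon
  have : volume (Ioo x y) = 0 := by
    refine measure_mono_null (fun z hz => ?_) hae
    exact hcon z (hyU hz)
  rw [Real.volume_Ioo] at this
  simp at this
  exact absurd this (not_le.2 hy)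

theorem init_tendsto (hm : MemF F) (h : SolP a b da F Ft Fx Fxx) :
    ∀ᵐ u ∂(volume.restrict (Ioo (0:ℝ) 1)),
      Tendsto (fun s => pinv (F s) u) (𝓝[>] 0) (𝓝 (pinv (F 0) u)) := by
  obtain ⟨P, hPc, -, -, hPF⟩ := hm
  obtain ⟨m1, l0, l1, b1, r1⟩ := cdf_facts (P 0) (F 0) (hPF 0 le_rfl)
  have hcount : (range fun r : ℚ => F 0 (r:ℝ)).Countable := countable_range _
  have hdense : Dense {x : ℝ | 0 < (P 0 : Measure ℝ) {x}}ᶜ := by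
    apply Set.Countable.dense_compl ℝ
    exact Measure.countable_meas_level_set_pos (μ := (P 0 : Measure ℝ)) measurable_id
  have hP : Tendsto P (𝓝[>] 0) (𝓝 (P 0)) :=
    (hPc 0 self_mem_Ici).mono_left (nhdsWithin_mono _ Ioi_subset_Ici_self)
  have hconv : ∀ x ∈ {x : ℝ | 0 < (P 0 : Measure ℝ) {x}}ᶜ,
      Tendsto (fun s => F s x) (𝓝[>] 0) (𝓝 (F 0 x)) := by
    intro x hx
    have hx0 : (P 0 : Measure ℝ) (frontier (Iic x)) = 0 := by
      rw [frontier_Iic]; simpa using hx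
    have := ProbabilityMeasure.tendsto_measure_of_null_frontier_of_tendsto' hP hx0
    have := (ENNReal.tendsto_toReal (measure_ne_top _ _)).comp this
    rw [← hPF 0 le_rfl x] at this
    refine this.congr' ?_
    filter_upwards [self_mem_nhdsWithin] with s hs
    exact (hPF s (le_of_lt hs) x).symm
  have hpos : ∀ᶠ s : ℝ in 𝓝[>] 0, 0 < s := self_mem_nhdsWithin
  filter_upwards [ae_restrict_mem measurableSet_Ioo, ae_restrict_of_ae (hcount.ae_notMem volume)]
    with u hu hur
  have hne : {x : ℝ | u < F 0 x}.Nonempty := (l1.eventually (lt_mem_nhds hu.2)).exists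
  have hbb : BddBelow {x : ℝ | u < F 0 x} := by
    obtain ⟨y, hy⟩ := (l0.eventually (gt_mem_nhds hu.1)).exists
    exact ⟨y, fun x hx => le_of_lt (m1.reflect_lt (hy.trans hx))⟩
  rw [tendsto_order]
  constructor
  · intro x hx
    obtain ⟨r, hr1, hr2⟩ := exists_rat_btwn hx
    have hfr : F 0 r < u := by
      refine lt_of_le_of_ne (not_lt.1 fun hc => ?_) (fun hc => hur ⟨r, hc⟩)
      exact absurd (csInf_le hbb hc) (not_le.2 hr2)
    obtain ⟨x', hx', hx'm⟩ := hdense.exists_between hr1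
    have hlt : F 0 x' < u := (m1 hx'm.2.le).trans_lt hfr
    filter_upwards [(hconv x' hx').eventually (gt_mem_nhds hlt), hpos] with s hs hs0
    exact hx'm.1.trans ((h.lt_pinv_iff hs0 hu).2 hs)
  · intro x hx
    obtain ⟨y, hy, hyx⟩ := exists_lt_of_csInf_lt hne hx
    obtain ⟨x', hx', hx'm⟩ := hdense.exists_between hyx
    have hlt : u < F 0 x' := lt_of_lt_of_le hy (m1 hx'm.1.le)
    filter_upwards [(hconv x' hx').eventually (lt_mem_nhds hlt), hpos] with s hs hs0
    exact ((h.pinv_lt_iff hs0 hu).2 hs).trans hx'm.2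

theorem init_bound (hp : 2 ≤ p) {μ ν : Measure ℝ} (hmF : MemF F) (hmG : MemF G)
    (hF : SolP a b da F Ft Fx Fxx) (hG : SolP a b da G Gt Gx Gxx)
    (eF : F 0 = cdfOf μ) (eG : G 0 = cdfOf ν) (hW : Wdist p (cdfOf μ) (cdfOf ν) < ⊤) :
    ∃ M : ℝ, 0 ≤ M ∧ ∀ R, 0 < R → ∀ ε, 0 < ε → ∀ᶠ s in 𝓝[>] (0:ℝ),
      (∫ u in Ioo (0:ℝ) 1, |wT (TR R) F G (s, u)| ^ p) ≤ M + ε := by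
  have hp0 : 0 ≤ p := by linarith
  have hM : (∫⁻ u in Set.Ioo (0:ℝ) 1, ENNReal.ofReal (|pinv (F 0) u - pinv (G 0) u| ^ p)) ≠ ⊤ := by
    intro hc
    rw [eF, eG] at hc
    rw [Wdist, hc, ENNReal.top_rpow_of_pos (by positivity)] at hW
    exact lt_irrefl _ hW
  set M := ∫⁻ u in Set.Ioo (0:ℝ) 1, ENNReal.ofReal (|pinv (F 0) u - pinv (G 0) u| ^ p) with hMd
  refine ⟨M.toReal, ENNReal.toReal_nonneg, fun R hR ε hε => ?_⟩
  have hlim : Tendsto (fun s => ∫ u in Ioo (0:ℝ) 1, |wT (TR R) F G (s, u)| ^ p) (𝓝[>] (0:ℝ))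
      (𝓝 (∫ u in Ioo (0:ℝ) 1, |wT (TR R) F G (0, u)| ^ p)) := by
    refine tendsto_integral_filter_of_dominated_convergence (fun _ => (4 * R) ^ p) ?_ ?_ ?_ ?_
    · filter_upwards [self_mem_nhdsWithin] with s hs
      refine ContinuousOn.aestronglyMeasurable ?_ measurableSet_Ioo
      have hc := wT_cont hF hG (TR_trunc hR).c0
      have : ContinuousOn (fun u => wT (TR R) F G (s, u)) (Ioo 0 1) :=
        hc.comp (f := fun u : ℝ => (s, u)) (by fun_prop) (fun u hu => ⟨hs, hu⟩)
      exact this.abs.rpow_const (fun _ _ => Or.inr hp0)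
    · refine Eventually.of_forall fun s => Eventually.of_forall fun u => ?_
      rw [Real.norm_of_nonneg (by positivity)]
      refine Real.rpow_le_rpow (abs_nonneg _) ?_ hp0
      have h1 := TR_bound hR (pinv (F s) u)
      have h2 := TR_bound hR (pinv (G s) u)
      simp only [wT]
      have := abs_sub (TR R (pinv (F s) u)) (TR R (pinv (G s) u))
      linarith
    · exact integrable_const _
    · filter_upwards [init_tendsto hmF hF, init_tendsto hmG hG] with u h1 h2
      have hT := (TR_trunc hR).c0
      have : Tendsto (fun s => wT (TR R) F G (s, u)) (𝓝[>] 0) (𝓝 (wT (TR R) F G (0, u))) := by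
        simp only [wT]
        exact ((hT.tendsto _).comp h1).sub ((hT.tendsto _).comp h2)
      exact this.abs.rpow_const (Or.inr hp0)
  have hle : (∫ u in Ioo (0:ℝ) 1, |wT (TR R) F G (0, u)| ^ p) ≤ M.toReal := by
    by_cases hi : IntegrableOn (fun u => |wT (TR R) F G (0, u)| ^ p) (Ioo 0 1)
    · rw [← ENNReal.ofReal_le_iff_le_toReal hM,
        ofReal_integral_eq_lintegral_ofReal hi (Eventually.of_forall fun u => by positivity)]
      refine lintegral_mono fun u => ENNReal.ofReal_le_ofReal ?_
      exact Real.rpow_le_rpow (abs_nonneg _) (TR_abs_mono hR le_rfl _ _).2 hp0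
    · rw [integral_undef hi]; exact ENNReal.toReal_nonneg
  filter_upwards [hlim.eventually (gt_mem_nhds (show _ < M.toReal + ε by linarith))] with s hs
  exact hs.le

end
end

section
section
variable {a b da : ℝ → ℝ} {F Ft Fx Fxx G Gt Gx Gxx : ℝ → ℝ → ℝ} {p : ℝ}

theorem mono_lim {α : Type*} [MeasurableSpace α] {m : Measure α} {f : ℕ → α → ℝ} {g : α → ℝ}
    (hf : ∀ n, Integrable (f n) m) (h0 : ∀ n, ∀ᵐ x ∂m, 0 ≤ f n x)
    (hmono : ∀ᵐ x ∂m, Monotone fun n => f n x)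
    (hlim : ∀ᵐ x ∂m, Tendsto (fun n => f n x) atTop (𝓝 (g x))) {K : ℝ}
    (hK : ∀ᶠ n in atTop, ∫ x, f n x ∂m ≤ K) :
    Integrable g m ∧ Tendsto (fun n => ∫ x, f n x ∂m) atTop (𝓝 (∫ x, g x ∂m)) := by
  have hg : Integrable g m := by
    refine ⟨aestronglyMeasurable_of_tendsto_ae _ (fun n => (hf n).1) hlim, ?_⟩
    have hfat : ∫⁻ x, ‖g x‖ₑ ∂m ≤ liminf (fun n => ∫⁻ x, ‖f n x‖ₑ ∂m) atTop := by
      refine le_trans (le_of_eq (lintegral_congr_ae ?_))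
        (lintegral_liminf_le' (fun n => (hf n).1.aemeasurable.enorm))
      filter_upwards [hlim] with x hx
      exact ((continuous_enorm.tendsto _).comp hx).liminf_eq.symm
    refine lt_of_le_of_lt hfat ?_
    refine lt_of_le_of_lt (b := ENNReal.ofReal K) ?_ ENNReal.ofReal_lt_top
    refine liminf_le_of_frequently_le' (Eventually.frequently ?_)
    filter_upwards [hK] with n hn
    have : ∫⁻ x, ‖f n x‖ₑ ∂m = ENNReal.ofReal (∫ x, f n x ∂m) := by
      rw [ofReal_integral_eq_lintegral_ofReal (hf n) (h0 n)]
      refine lintegral_congr_ae ?_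
      filter_upwards [h0 n] with x hx
      exact Real.enorm_of_nonneg hx
    rw [this]
    exact ENNReal.ofReal_le_ofReal hn
  exact ⟨hg, integral_tendsto_of_tendsto_of_monotone hf hg hmono hlim⟩

def disF (p : ℝ) (a : ℝ → ℝ) (F Fx G Gx : ℝ → ℝ → ℝ) (q : ℝ × ℝ) : ℝ :=
  a q.2 * |pinv (F q.1) q.2 - pinv (G q.1) q.2| ^ (p - 2) *
    ((Fx q.1 (pinv (F q.1) q.2) - Gx q.1 (pinv (G q.1) q.2)) ^ 2 /
      (Fx q.1 (pinv (F q.1) q.2) * Gx q.1 (pinv (G q.1) q.2)))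

theorem ev_big (x : ℝ) : ∀ᶠ n : ℕ in atTop, |x| ≤ (n:ℝ) + 1 := by
  obtain ⟨N, hN⟩ := exists_nat_ge |x|
  filter_upwards [eventually_ge_atTop N] with n hn
  have : (N:ℝ) ≤ n := by exact_mod_cast hn
  linarith

theorem dis_nonneg (ha0 : ∀ u ∈ Icc (0:ℝ) 1, 0 ≤ a u) (hF : SolP a b da F Ft Fx Fxx)
    (hG : SolP a b da G Gt Gx Gxx) (R : ℝ) {q : ℝ × ℝ} (hq : 0 < q.1) (hu : q.2 ∈ Ioo (0:ℝ) 1) :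
    0 ≤ disT p a (TR R) (TR1 R) F Fx G Gx q := by
  have h1 := ha0 _ (Ioo_subset_Icc_self hu)
  have h2 := hF.pos _ hq (pinv (F q.1) q.2)
  have h3 := hG.pos _ hq (pinv (G q.1) q.2)
  have h4 := (TR1_mem R (pinv (F q.1) q.2)).1
  have h5 := (TR1_mem R (pinv (G q.1) q.2)).1
  unfold disT
  positivity

theorem dis_mono (hp : 2 ≤ p) (ha0 : ∀ u ∈ Icc (0:ℝ) 1, 0 ≤ a u) (hF : SolP a b da F Ft Fx Fxx)
    (hG : SolP a b da G Gt Gx Gxx) {R R' : ℝ} (hR : 0 < R) (hRR : R ≤ R') {q : ℝ × ℝ}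
    (hq : 0 < q.1) (hu : q.2 ∈ Ioo (0:ℝ) 1) :
    disT p a (TR R) (TR1 R) F Fx G Gx q ≤ disT p a (TR R') (TR1 R') F Fx G Gx q := by
  have h1 := ha0 _ (Ioo_subset_Icc_self hu)
  have h2 := hF.pos _ hq (pinv (F q.1) q.2)
  have h3 := hG.pos _ hq (pinv (G q.1) q.2)
  have h4 := (TR1_mem R (pinv (F q.1) q.2)).1
  have h5 := (TR1_mem R (pinv (G q.1) q.2)).1
  have h4' := (TR1_mem R' (pinv (F q.1) q.2)).1
  have m4 := TR1_mono hR hRR (pinv (F q.1) q.2)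
  have m5 := TR1_mono hR hRR (pinv (G q.1) q.2)
  have mw : |wT (TR R) F G q| ^ (p - 2) ≤ |wT (TR R') F G q| ^ (p - 2) :=
    Real.rpow_le_rpow (abs_nonneg _) (TR_abs_mono hR hRR _ _).1 (by linarith)
  unfold disT
  gcongr

theorem main_abs (hp : 2 ≤ p) (ha : ContinuousOn a (Icc 0 1)) (hb : ContinuousOn b (Icc 0 1))
    (ha0 : ∀ u ∈ Icc (0:ℝ) 1, 0 ≤ a u)
    (hda : ∀ u ∈ Ioo (0:ℝ) 1, HasDerivAt a (da u) u)
    {C : ℝ} (haC : ∀ u ∈ Icc (0:ℝ) 1, |a u| ≤ C) (hbC : ∀ u ∈ Icc (0:ℝ) 1, |b u| ≤ C)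
    (hF : SolP a b da F Ft Fx Fxx) (hG : SolP a b da G Gt Gx Gxx)
    (hM : ∃ M : ℝ, 0 ≤ M ∧ ∀ R, 0 < R → ∀ ε, 0 < ε → ∀ᶠ s in 𝓝[>] (0:ℝ),
      (∫ u in Ioo (0:ℝ) 1, |wT (TR R) F G (s, u)| ^ p) ≤ M + ε)
    (hTail : ∀ T, 0 < T → ∀ ε > 0, ∀ᶠ R : ℝ in atTop, ∀ s ∈ Ioc 0 T,
      R ^ (p - 1) * (F s (-R) + (1 - F s R) + (G s (-R) + (1 - G s R))) ≤ ε)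
    {t₁ t₂ : ℝ} (h1 : 0 < t₁) (h12 : t₁ ≤ t₂) :
    IntegrableOn (disF p a F Fx G Gx) (Ioc t₁ t₂ ×ˢ Ioo 0 1) ∧
    (∫ u in Ioo (0:ℝ) 1, |pinv (F t₂) u - pinv (G t₂) u| ^ p)
        - (∫ u in Ioo (0:ℝ) 1, |pinv (F t₁) u - pinv (G t₁) u| ^ p) =
      -(p * (p - 1) / 2 * ∫ q in Ioc t₁ t₂ ×ˢ Ioo (0:ℝ) 1, disF p a F Fx G Gx q) := by
  have hp0 : 0 ≤ p := by linarith
  have hcp : 0 < p * (p - 1) / 2 := by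
    have : 0 < p - 1 := by linarith
    positivity
  obtain ⟨C', hC', hE⟩ := err_bound (da := da) hp haC hbC
  obtain ⟨M, hM0, hM⟩ := hM
  have hR : ∀ n : ℕ, (0:ℝ) < (n:ℝ) + 1 := fun n => by positivity
  have hRm : ∀ {n m : ℕ}, n ≤ m → (n:ℝ) + 1 ≤ m + 1 := fun h => by
    have : ((_:ℕ):ℝ) ≤ _ := Nat.cast_le.2 h
    linarith
  have hRt : Tendsto (fun n : ℕ => (n:ℝ) + 1) atTop atTop :=
    tendsto_atTop_add_const_right _ _ tendsto_natCast_atTop_atTop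
  have TI := fun (n : ℕ) (s t : ℝ) (hs : 0 < s) (hst : s ≤ t) =>
    trunc_identity hp ha hb hda hF hG (TR_trunc (hR n)) hs hst
  -- the error is small, uniformly in the time interval
  have hErr : ∀ T, 0 < T → ∀ ε > 0, ∀ᶠ n : ℕ in atTop, ∀ s t, 0 < s → s ≤ t → t ≤ T →
      |∫ q in Ioc s t ×ˢ Ioo (0:ℝ) 1, errT p a b (TR (n+1)) (TR1 (n+1)) (TR2 (n+1)) F G q| ≤ ε := by
    intro T hT ε hε
    have hd : 0 < ε / (C' * T + 1) := by positivity
    filter_upwards [hRt.eventually (hTail T hT _ hd)] with n hn s t hs hst htT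
    refine (hE hF hG _ (by linarith [(Nat.cast_nonneg n : (0:ℝ) ≤ n)]) s t _ hs hst
      (TI n s t hs hst).1 (fun r hr => hn r ⟨hs.trans hr.1, hr.2.trans htT⟩)).trans ?_
    calc C' * (ε / (C' * T + 1)) * (t - s) ≤ C' * (ε / (C' * T + 1)) * T := by
          gcongr; linarith
      _ = ε * (C' * T / (C' * T + 1)) := by ring
      _ ≤ ε * 1 := by
          gcongr
          rw [div_le_one (by positivity)]; linarith
      _ = ε := mul_one _
  have hdis : ∀ (n : ℕ) (s t : ℝ), 0 < s →
      0 ≤ ∫ q in Ioc s t ×ˢ Ioo (0:ℝ) 1, disT p a (TR (n+1)) (TR1 (n+1)) F Fx G Gx q := by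
    intro n s t hs
    refine setIntegral_nonneg (measurableSet_Ioc.prod measurableSet_Ioo) fun q hq => ?_
    exact dis_nonneg ha0 hF hG _ (hs.trans hq.1.1) hq.2
  -- uniform bound
  have hBd : ∀ t, 0 < t → ∀ᶠ n : ℕ in atTop,
      (∫ u in Ioo (0:ℝ) 1, |wT (TR (n+1)) F G (t, u)| ^ p) ≤ M + 2 := by
    intro t ht
    filter_upwards [hErr t ht 1 one_pos] with n hn
    obtain ⟨s, hs, hs0, hst⟩ := ((hM _ (hR n) 1 one_pos).and
      (Ioo_mem_nhdsGT ht)).exists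
    have e := (TI n s t hs0 hst.le).2.2
    have h2 := mul_nonneg hcp.le (hdis n s t hs0)
    have h3 := (abs_le.1 (hn s t hs0 hst.le le_rfl)).2
    linarith
  -- convergence of the truncated functional
  have hI : ∀ t, 0 < t → Tendsto (fun n : ℕ => ∫ u in Ioo (0:ℝ) 1, |wT (TR (n+1)) F G (t, u)| ^ p)
      atTop (𝓝 (∫ u in Ioo (0:ℝ) 1, |pinv (F t) u - pinv (G t) u| ^ p)) := by
    intro t ht
    refine (mono_lim (f := fun (n : ℕ) u => |wT (TR (n+1)) F G (t, u)| ^ p) (fun n => ?_)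
      (fun n => Eventually.of_forall fun u => by positivity)
      (Eventually.of_forall fun u => ?_) (Eventually.of_forall fun u => ?_) (hBd t ht)).2
    · have hc := wT_cont hF hG (TR_trunc (hR n)).c0
      have : ContinuousOn (fun u => wT (TR (n+1)) F G (t, u)) (Ioo 0 1) :=
        hc.comp (f := fun u : ℝ => (t, u)) (by fun_prop) (fun u hu => ⟨ht, hu⟩)
      have hc := this.abs.rpow_const (p := p) (fun _ _ => Or.inr hp0)
      refine Integrable.of_bound (hc.aestronglyMeasurable measurableSet_Ioo)
        ((4 * ((n:ℝ) + 1)) ^ p) (Eventually.of_forall fun u => ?_)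
      rw [Real.norm_of_nonneg (by positivity)]
      refine Real.rpow_le_rpow (abs_nonneg _) ?_ hp0
      have h1 := TR_bound (hR n) (pinv (F t) u)
      have h2 := TR_bound (hR n) (pinv (G t) u)
      simp only [wT]
      have := abs_sub (TR (n+1) (pinv (F t) u)) (TR (n+1) (pinv (G t) u))
      linarith
    · intro n m hnm
      exact Real.rpow_le_rpow (abs_nonneg _) (TR_abs_mono (hR n) (hRm hnm) _ _).1 hp0
    · refine tendsto_const_nhds.congr' ?_
      filter_upwards [ev_big (pinv (F t) u), ev_big (pinv (G t) u)] with n x1 x2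
      simp only [wT]
      rw [TR_id (hR n) x1, TR_id (hR n) x2]
  have h2 : 0 < t₂ := by linarith
  have hE0 : Tendsto (fun n : ℕ => ∫ q in Ioc t₁ t₂ ×ˢ Ioo (0:ℝ) 1,
      errT p a b (TR (n+1)) (TR1 (n+1)) (TR2 (n+1)) F G q) atTop (𝓝 0) := by
    rw [Metric.tendsto_nhds]
    intro ε hε
    filter_upwards [hErr t₂ h2 (ε/2) (by positivity)] with n hn
    rw [Real.dist_eq, sub_zero]
    linarith [hn t₁ t₂ h1 h12 le_rfl]
  have hmem : ∀ᵐ q ∂(volume.restrict (Ioc t₁ t₂ ×ˢ Ioo (0:ℝ) 1)), q ∈ Ioc t₁ t₂ ×ˢ Ioo (0:ℝ) 1 :=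
    ae_restrict_mem (measurableSet_Ioc.prod measurableSet_Ioo)
  obtain ⟨hint, hlim⟩ := mono_lim (m := volume.restrict (Ioc t₁ t₂ ×ˢ Ioo (0:ℝ) 1))
    (f := fun (n : ℕ) q => disT p a (TR (n+1)) (TR1 (n+1)) F Fx G Gx q)
    (g := disF p a F Fx G Gx) (K := (M + 3) / (p * (p - 1) / 2))
    (fun n => (TI n t₁ t₂ h1 h12).2.1)
    (fun n => by
      filter_upwards [hmem] with q hq
      exact dis_nonneg ha0 hF hG _ (h1.trans hq.1.1) hq.2)
    (by
      filter_upwards [hmem] with q hq n m hnm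
      exact dis_mono hp ha0 hF hG (hR n) (hRm hnm) (h1.trans hq.1.1) hq.2)
    (by
      refine Eventually.of_forall fun q => tendsto_const_nhds.congr' ?_
      filter_upwards [ev_big (pinv (F q.1) q.2), ev_big (pinv (G q.1) q.2)] with n x1 x2
      simp only [disT, disF, wT]
      rw [TR_id (hR n) x1, TR_id (hR n) x2, TR1_one (hR n) x1, TR1_one (hR n) x2]
      ring)
    (by
      filter_upwards [hErr t₂ h2 1 one_pos, hBd t₁ h1] with n hn hb1
      rw [le_div_iff₀ hcp]
      have e := (TI n t₁ t₂ h1 h12).2.2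
      have h3 := (abs_le.1 (hn t₁ t₂ h1 h12 le_rfl)).2
      have h4 : 0 ≤ ∫ u in Ioo (0:ℝ) 1, |wT (TR (n+1)) F G (t₂, u)| ^ p :=
        integral_nonneg fun u => by positivity
      linarith)
  refine ⟨hint, ?_⟩
  have l1 := (hI t₂ h2).sub (hI t₁ h1)
  have l2 := hE0.sub (hlim.const_mul (p * (p - 1) / 2))
  rw [zero_sub] at l2
  refine tendsto_nhds_unique l1 (l2.congr fun n => ?_)
  exact (TI n t₁ t₂ h1 h12).2.2.symm

theorem tails_all (hp : 2 ≤ p) (ha : ContinuousOn a (Icc 0 1)) (hb : ContinuousOn b (Icc 0 1))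
    {C : ℝ} (haC : ∀ u ∈ Icc (0:ℝ) 1, |a u| ≤ C) (hbC : ∀ u ∈ Icc (0:ℝ) 1, |b u| ≤ C)
    {μ ν : Measure ℝ} [IsProbabilityMeasure μ] [IsProbabilityMeasure ν]
    (hF : IsWeakSolution (primitive a) (primitive b) (cdfOf μ) F)
    (hG : IsWeakSolution (primitive a) (primitive b) (cdfOf ν) G)
    (sF : Sol a b da F Ft Fx Fxx) (sG : Sol a b da G Gt Gx Gxx)
    (htail_top : Tendsto (fun x => |x| ^ (p - 1) * (tl (cdfOf μ) x + tl (cdfOf ν) x))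
      atTop (nhds 0))
    (htail_bot : Tendsto (fun x => |x| ^ (p - 1) * (tl (cdfOf μ) x + tl (cdfOf ν) x))
      atBot (nhds 0)) :
    ∀ T, 0 < T → ∀ ε > 0, ∀ᶠ R : ℝ in atTop, ∀ s ∈ Ioc 0 T,
      R ^ (p - 1) * (F s (-R) + (1 - F s R) + (G s (-R) + (1 - G s R))) ≤ ε := by
  intro T hT ε hε
  obtain ⟨m1, -, -, b1, -⟩ := cdf_facts (⟨μ, inferInstance⟩ : ProbabilityMeasure ℝ) (cdfOf μ)
    (fun x => rfl)
  obtain ⟨m2, -, -, b2, -⟩ := cdf_facts (⟨ν, inferInstance⟩ : ProbabilityMeasure ℝ) (cdfOf ν)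
    (fun x => rfl)
  obtain ⟨k1, k2⟩ := tl_split b1 b2 htail_top htail_bot
  obtain ⟨k3, k4⟩ := tl_split b2 b1 (by simpa only [add_comm] using htail_top)
    (by simpa only [add_comm] using htail_bot)
  have hq : 0 ≤ p - 1 := by linarith
  have he : 0 < ε / 4 := by positivity
  filter_upwards [tail_top ha hb haC hbC hF sF m1 b1 hq hT k1 _ he,
    tail_bot ha hb haC hbC hF sF m1 b1 hq hT k2 _ he,
    tail_top ha hb haC hbC hG sG m2 b2 hq hT k3 _ he,
    tail_bot ha hb haC hbC hG sG m2 b2 hq hT k4 _ he] with R x1 x2 x3 x4 s hs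
  have := x1 s hs
  have := x2 s hs
  have := x3 s hs
  have := x4 s hs
  rw [mul_add, mul_add, mul_add]
  linarith

end
end

/-- Explicit formula for the dissipation of `W_p^p` along two classical probabilistic
solutions `F` and `G`. -/
theorem wasserstein_flow_derivative
    (a b : ℝ → ℝ)
    (ha : ContinuousOn a (Set.Icc 0 1)) (hb : ContinuousOn b (Set.Icc 0 1))
    (ha0 : ∀ u ∈ Set.Icc (0:ℝ) 1, 0 ≤ a u)
    (hD3 : ∃ c > (0:ℝ), ∀ u ∈ Set.Icc (0:ℝ) 1, c ≤ a u)
    (hR1 : ContDiffOn ℝ 1 a (Set.Icc 0 1))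
    (μ ν : Measure ℝ) [IsProbabilityMeasure μ] [IsProbabilityMeasure ν]
    (hμ : Integrable (fun x => |x|) μ) (hν : Integrable (fun x => |x|) ν)
    (F G : ℝ → ℝ → ℝ)
    (hF : IsWeakSolution (primitive a) (primitive b) (cdfOf μ) F) (hFmem : MemF F)
    (hG : IsWeakSolution (primitive a) (primitive b) (cdfOf ν) G) (hGmem : MemF G)
    (hFcl : HasClassicalRegularity a b F) (hGcl : HasClassicalRegularity a b G)
    (hFbd : ∀ t₁ t₂ : ℝ, 0 < t₁ → t₁ < t₂ →
      ∃ M : ℝ, ∀ t ∈ Set.Icc t₁ t₂, ∀ x : ℝ, |deriv (fun y => F t y) x| ≤ M)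
    (hGbd : ∀ t₁ t₂ : ℝ, 0 < t₁ → t₁ < t₂ →
      ∃ M : ℝ, ∀ t ∈ Set.Icc t₁ t₂, ∀ x : ℝ, |deriv (fun y => G t y) x| ≤ M)
    (p : ℝ) (hp : 2 ≤ p)
    (hW : Wdist p (cdfOf μ) (cdfOf ν) < ⊤)
    (htail_top : Tendsto (fun x => |x| ^ (p - 1) * (tl (cdfOf μ) x + tl (cdfOf ν) x))
      atTop (nhds 0))
    (htail_bot : Tendsto (fun x => |x| ^ (p - 1) * (tl (cdfOf μ) x + tl (cdfOf ν) x))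
      atBot (nhds 0)) :
    ∀ t₁ t₂ : ℝ, 0 < t₁ → t₁ < t₂ →
      (∫ u in Set.Ioo (0:ℝ) 1, |pinv (F t₂) u - pinv (G t₂) u| ^ p)
        - (∫ u in Set.Ioo (0:ℝ) 1, |pinv (F t₁) u - pinv (G t₁) u| ^ p)
      = -(p * (p - 1) / 2) *
          ∫ t in t₁..t₂, ∫ u in Set.Ioo (0:ℝ) 1,
            a u * |pinv (F t) u - pinv (G t) u| ^ (p - 2) *
              (deriv (fun v => pinv (F t) v) u - deriv (fun v => pinv (G t) v) u) ^ 2 /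
              (deriv (fun v => pinv (F t) v) u * deriv (fun v => pinv (G t) v) u) := by
  obtain ⟨c, hc, hac⟩ := hD3
  have hud : UniqueDiffOn ℝ (Icc (0:ℝ) 1) := uniqueDiffOn_Icc zero_lt_one
  have hdac : ContinuousOn (derivWithin a (Icc 0 1)) (Icc 0 1) :=
    hR1.continuousOn_derivWithin hud le_rfl
  obtain ⟨C1, hC1⟩ := isCompact_Icc.exists_bound_of_continuousOn ha
  obtain ⟨C2, hC2⟩ := isCompact_Icc.exists_bound_of_continuousOn hb
  obtain ⟨C3, hC3⟩ := isCompact_Icc.exists_bound_of_continuousOn hdac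
  have haC : ∀ u ∈ Icc (0:ℝ) 1, |a u| ≤ max C1 (max C2 C3) := fun u hu =>
    (hC1 u hu).trans (le_max_left _ _)
  have hbC : ∀ u ∈ Icc (0:ℝ) 1, |b u| ≤ max C1 (max C2 C3) := fun u hu =>
    (hC2 u hu).trans ((le_max_left _ _).trans (le_max_right _ _))
  have hdaC : ∀ u ∈ Icc (0:ℝ) 1, |derivWithin a (Icc 0 1) u| ≤ max C1 (max C2 C3) := fun u hu =>
    (hC3 u hu).trans ((le_max_right _ _).trans (le_max_right _ _))
  have hda : ∀ u ∈ Ioo (0:ℝ) 1, HasDerivAt a (derivWithin a (Icc 0 1) u) u := fun u hu =>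
    ((hR1.differentiableOn one_ne_zero) u (Ioo_subset_Icc_self hu)).hasDerivWithinAt.hasDerivAt
      (Icc_mem_nhds hu.1 hu.2)
  obtain ⟨Ft, Fx, Fxx, sF⟩ := Sol.of_hyp ha hb hR1 hFmem hFcl
  obtain ⟨Gt, Gx, Gxx, sG⟩ := Sol.of_hyp ha hb hR1 hGmem hGcl
  have pF : SolP a b (derivWithin a (Icc 0 1)) F Ft Fx Fxx :=
    ⟨sF, fun t ht x => sF.pos hc hac haC hdaC hbC ht x⟩
  have pG : SolP a b (derivWithin a (Icc 0 1)) G Gt Gx Gxx :=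
    ⟨sG, fun t ht x => sG.pos hc hac haC hdaC hbC ht x⟩
  have eF := init_eq ha hb haC hbC hF hFmem sF
  have eG := init_eq ha hb haC hbC hG hGmem sG
  intro t₁ t₂ h1 h12
  obtain ⟨hint, hmain⟩ := main_abs hp ha hb ha0 hda haC hbC pF pG
    (init_bound hp hFmem hGmem pF pG eF eG hW)
    (tails_all hp ha hb haC hbC hF hG sF sG htail_top htail_bot) h1 h12.le
  rw [hmain, neg_mul]
  congr 2
  rw [Measure.volume_eq_prod] at hint ⊢
  rw [setIntegral_prod _ hint, intervalIntegral.integral_of_le h12.le]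
  refine setIntegral_congr_fun measurableSet_Ioc fun t ht => ?_
  refine setIntegral_congr_fun measurableSet_Ioo fun u hu => ?_
  have ht0 : 0 < t := h1.trans ht.1
  simp only [disF]
  rw [(pF.dX_u ht0 hu).deriv, (pG.dX_u ht0 hu).deriv]
  have f0 := (pF.pos t ht0 (pinv (F t) u)).ne'
  have g0 := (pG.pos t ht0 (pinv (G t) u)).ne'
  field_simp
  ring
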